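/- For all integers Δ ≥ 3 and all reals λ > 0, there exists a constant C = C(Δ,λ) such that for every finite simple graph G = (V,E) with n = |V| ≥ 2 vertices, m = |E| ≥ 1 edges, and maximum degree at most Δ, the Glauber dynamics for the monomer-dimer model on G with fugacity λ — the Markov chain on matchings of G that from matching M picks e ∈ E uniformly at random, sets M' = M △ {e}, moves to M' with probability λ^{|M'|}/(λ^{|M|}+λ^{|M'|}) if M' is a matching, and otherwise stays at M — has mixing time T_mix(P, 1/4) ≤ C·m·log n. -/

import Mathlib

/-!
The dynamics is an average over the edges `e ∈ E` of resampling the status of `e` given all other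
edges. It therefore suffices to show *approximate tensorization of entropy*: for every density `ν`,
the relative entropy `H(E)` of `ν` with respect to the Gibbs measure is at most
`C ∑ e ∈ E, H({e})`, where `H(S)` is the average relative entropy of the edges in `S` given those
outside `S` (`inEnt`) and `C` depends only on `Δ` and `λ` (`tensorization`). Convexity then makes
each step contract relative entropy by the factor `1 - 1 / (C m)` (`relEnt_step`). Relative entropy
starts at `O(m)` (`neg_log_mdGibbs_le`) and dominates squared total variation (`tvDist_sq_le`), and
`m ≤ n ^ 2`, so `O(m log n)` steps suffice.

Tensorization combines two estimates on the average of `H` over random subsets `S` of `E` that keep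
each edge with probability `θ`.

* *Lower bound, for every `θ`: the average is at least `θ ^ K H(E)`* (`bern_decay`). Deleting a
  vertex changes the edge marginals by at most `B = Δ λ` in total (`influence`, by induction on the
  graph), so covariances of edge indicators are bounded in operator norm by `1 + 2 B`, uniformly in
  edge-dependent fugacities (`var_le`). Exponential tilts of a monomer-dimer measure are again
  monomer-dimer measures, so the variance bound integrates to a Gaussian bound on Laplace transforms
  (`log_laplace_wt`). By duality the entropies explained by single edges sum to at most `K` times
  the relative entropy (`single_edge_entropy`). Conditioning preserves the class of measures, so
  this gives `∑ e ∈ S, (H(S) - H(S \ e)) ≤ K H(S)` for every `S` (`inEnt_erase`), which is a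
  differential inequality in `θ`.

* *Upper bound, for small `θ`: the average is at most `2 θ C' ∑ e ∈ E, H({e})`* (`explore`). An
  explicit computation around one edge gives `H(S ∪ e) - H(S) ≤ C' (H({e}) + H(S) - H(S \ N(e)))`,
  where `N(e)` is the set of neighbouring edges (`outEnt_local`). Iterating this over the neighbours
  is an exploration with branching number at most `2 Δ θ C'`, so it converges once `θ` is small.
-/

open Finset

attribute [local instance] Classical.propDecidable

noncomputable section

variable {S : Type} [Fintype S] [DecidableEq S]

/-- Total variation distance between two (densities of) distributions on a finite set. -/
def tvDist (p μ : S → ℝ) : ℝ := (1 / 2) * ∑ x, |p x - μ x|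

/-- Mixing time of a Markov chain with transition matrix `P` and stationary
distribution `μ`: the maximum over starting states `x` in the support of `μ` of the first
time `t` at which the distribution `P^t(x,·)` is within total variation distance `ε`
of `μ`. -/
def mixingTime (μ : S → ℝ) (P : Matrix S S ℝ) (ε : ℝ) : ℕ :=
  (Finset.univ.filter fun x => 0 < μ x).sup
    fun x => sInf {t : ℕ | tvDist (fun y => (P ^ t) x y) μ ≤ ε}

variable {V : Type} [Fintype V] [DecidableEq V]

/-- `M` is (the edge set of) a matching of `G`: all its members are edges of `G` and no two
distinct members share a vertex. -/
def IsMatchingSet (G : SimpleGraph V) (M : Finset (Sym2 V)) : Prop :=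
  ↑M ⊆ G.edgeSet ∧ ∀ e ∈ M, ∀ f ∈ M, e ≠ f → ∀ v : V, v ∈ e → v ∉ f

/-- Weight `λ^{|M|}` of a matching `M` in the monomer-dimer model (zero for non-matchings). -/
def mdGibbsWeight (G : SimpleGraph V) (lam : ℝ) (M : Finset (Sym2 V)) : ℝ :=
  if IsMatchingSet G M then lam ^ M.card else 0

/-- Gibbs distribution of the monomer-dimer model on `G` with fugacity `λ`. -/
def mdGibbs (G : SimpleGraph V) (lam : ℝ) (M : Finset (Sym2 V)) : ℝ :=
  mdGibbsWeight G lam M / ∑ M' : Finset (Sym2 V), mdGibbsWeight G lam M'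

/-- Acceptance probability for flipping edge `e` from matching `M`:
`λ^{|M△{e}|}/(λ^{|M|}+λ^{|M△{e}|})` if `M△{e}` is a matching, `0` otherwise. -/
def mdAccept (G : SimpleGraph V) (lam : ℝ) (M : Finset (Sym2 V)) (e : Sym2 V) : ℝ :=
  if IsMatchingSet G (symmDiff M {e}) then
    lam ^ (symmDiff M {e}).card / (lam ^ M.card + lam ^ (symmDiff M {e}).card)
  else 0

/-- The Glauber dynamics for the monomer-dimer model: from `M`, pick `e ∈ E` uniformly at
random, let `M' = M △ {e}`, move to `M'` with probability
`λ^{|M'|}/(λ^{|M|}+λ^{|M'|})` if `M'` is a matching, and otherwise stay at `M`. -/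
def mdGlauber (G : SimpleGraph V) [DecidableRel G.Adj] (lam : ℝ) :
    Matrix (Finset (Sym2 V)) (Finset (Sym2 V)) ℝ :=
  Matrix.of fun M N =>
    (G.edgeFinset.card : ℝ)⁻¹ *
      ∑ e ∈ G.edgeFinset,
        ((if N = symmDiff M {e} then mdAccept G lam M e else 0) +
         (if N = M then 1 - mdAccept G lam M e else 0))

end

set_option linter.unusedSectionVars false

/-! ### Relative entropy of unnormalised masses -/

/-- The relative entropy term `a log (a / z)` of a mass `a` with respect to a reference mass `z`.
By the conventions for division and logarithm at zero it vanishes for `a = 0`, whatever `z` is. -/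
noncomputable def kl (a z : ℝ) : ℝ := a * Real.log (a / z)

lemma kl_def (a z : ℝ) : kl a z = a * Real.log (a / z) := rfl

@[simp] lemma kl_zero (z : ℝ) : kl 0 z = 0 := by simp [kl]

lemma kl_self_one : kl 1 1 = 0 := by simp [kl]

/-- Tangent-line lower bound for `kl`, sharpened by a Hellinger term; `r` is the slope at which
the tangent is taken. -/
lemma kl_ge_hell {a z r : ℝ} (ha : 0 ≤ a) (hz : 0 ≤ z) (haz : z = 0 → a = 0) (hr : 0 ≤ r)
    (har : r = 0 → a = 0) :
    a * Real.log r + a - z * r + (√a - √(z * r)) ^ 2 ≤ kl a z := by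
  have hzr : 0 ≤ z * r := mul_nonneg hz hr
  rcases ha.eq_or_lt with h | h
  · subst h; simp [Real.sq_sqrt hzr]
  have hz' : 0 < z := lt_of_le_of_ne hz (fun h' => by have := haz h'.symm; linarith)
  have hr' : 0 < r := lt_of_le_of_ne hr (fun h' => by have := har h'.symm; linarith)
  have hx : 0 < √(z * r) / √a := by positivity
  have h1 := Real.log_le_sub_one_of_pos hx
  have h2 : Real.log (√(z * r) / √a) = (Real.log z + Real.log r - Real.log a) / 2 := by
    rw [Real.log_div (by positivity) (by positivity), Real.log_sqrt hzr, Real.log_sqrt h.le,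
      Real.log_mul hz'.ne' hr'.ne']
    ring
  have h3 : a * (√(z * r) / √a) = √a * √(z * r) := by
    have : √a * √a = a := Real.mul_self_sqrt h.le
    have hs : √a ≠ 0 := by positivity
    field_simp
    nlinarith [this]
  have h4 : (√a - √(z * r)) ^ 2 = a + z * r - 2 * (√a * √(z * r)) := by
    rw [sub_sq, Real.sq_sqrt h.le, Real.sq_sqrt hzr]; ring
  rw [kl, Real.log_div h.ne' hz'.ne', h4]
  have h5 := mul_le_mul_of_nonneg_left h1 h.le
  rw [h2, mul_sub, h3] at h5
  nlinarith

lemma kl_ge {a z r : ℝ} (ha : 0 ≤ a) (hz : 0 ≤ z) (haz : z = 0 → a = 0) (hr : 0 ≤ r)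
    (har : r = 0 → a = 0) :
    a * Real.log r + a - z * r ≤ kl a z := by
  have := kl_ge_hell ha hz haz hr har
  nlinarith [sq_nonneg (√a - √(z * r))]

lemma kl_smul {c : ℝ} (hc : c ≠ 0) (a z : ℝ) : kl (c * a) (c * z) = c * kl a z := by
  rw [kl, kl, mul_div_mul_left _ _ hc]; ring

/-- The log-sum inequality. -/
lemma log_sum {ι : Type*} (s : Finset ι) (a z : ι → ℝ) (ha : ∀ i ∈ s, 0 ≤ a i)
    (hz : ∀ i ∈ s, 0 ≤ z i) (haz : ∀ i ∈ s, z i = 0 → a i = 0) :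
    kl (∑ i ∈ s, a i) (∑ i ∈ s, z i) ≤ ∑ i ∈ s, kl (a i) (z i) := by
  set N := ∑ i ∈ s, a i with hN
  set M := ∑ i ∈ s, z i with hM
  have hN0 : 0 ≤ N := sum_nonneg ha
  have hM0 : 0 ≤ M := sum_nonneg hz
  have hMN : M = 0 → N = 0 := by
    intro h
    have h' := (sum_eq_zero_iff_of_nonneg hz).1 h
    exact sum_eq_zero fun i hi => haz i hi (h' i hi)
  have hr : N / M = 0 → ∀ i ∈ s, a i = 0 := by
    intro h
    have : N = 0 := by
      rcases div_eq_zero_iff.1 h with h | h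
      · exact h
      · exact hMN h
    exact (sum_eq_zero_iff_of_nonneg ha).1 this
  have h1 : ∑ i ∈ s, (a i * Real.log (N / M) + a i - z i * (N / M)) ≤ ∑ i ∈ s, kl (a i) (z i) :=
    sum_le_sum fun i hi => kl_ge (ha i hi) (hz i hi) (haz i hi) (by positivity)
      (fun h => hr h i hi)
  rw [sum_sub_distrib, sum_add_distrib, ← sum_mul, ← sum_mul, ← hN, ← hM] at h1
  have h2 : M * (N / M) = N := by
    rcases eq_or_ne M 0 with h | h
    · rw [h, hMN h]; simp
    · field_simp
  rw [kl]; linarith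

/-- Unnormalised entropy of a two-point space with masses `a, b` and reference masses `α, β`. -/
noncomputable def ent (a α b β : ℝ) : ℝ := kl a α + kl b β - kl (a + b) (α + β)

lemma ent_nonneg {a α b β : ℝ} (ha : 0 ≤ a) (hα : 0 ≤ α) (hb : 0 ≤ b) (hβ : 0 ≤ β)
    (haα : α = 0 → a = 0) (hbβ : β = 0 → b = 0) : 0 ≤ ent a α b β := by
  have := log_sum (univ : Finset (Fin 2)) ![a, b] ![α, β]
    (by intro i _; fin_cases i <;> simpa) (by intro i _; fin_cases i <;> simpa)
    (by intro i _; fin_cases i <;> simpa)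
  simp only [Fin.sum_univ_two, Matrix.cons_val_zero, Matrix.cons_val_one] at this
  rw [ent]; linarith

lemma ent_zero_left (b β : ℝ) : ent 0 0 b β = 0 := by simp [ent]

/-- One-sided Hellinger lower bound for the two-point entropy. -/
lemma ent_lower_one {a α b β : ℝ} (ha : 0 ≤ a) (hα : 0 < α) (hb : 0 ≤ b) (hβ : 0 ≤ β)
    (hbβ : β = 0 → b = 0) :
    α * (√(a / α) - √((a + b) / (α + β))) ^ 2 ≤ ent a α b β := by
  set ρ := (a + b) / (α + β) with hρ
  have hρ0 : 0 ≤ ρ := by positivity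
  have hs : (α + β) * ρ = a + b := by rw [hρ]; field_simp
  have hz : ρ = 0 → a = 0 ∧ b = 0 := by
    intro h; rw [h] at hs; constructor <;> linarith
  have h1 := kl_ge_hell ha hα.le (fun h => absurd h hα.ne') hρ0 (fun h => (hz h).1)
  have h2 := kl_ge hb hβ hbβ hρ0 (fun h => (hz h).2)
  have h3 : (√a - √(α * ρ)) ^ 2 = α * (√(a / α) - √ρ) ^ 2 := by
    have : √a = √α * √(a / α) := by
      rw [← Real.sqrt_mul hα.le]; congr 1; field_simp
    rw [this, Real.sqrt_mul hα.le, ← mul_sub, mul_pow, Real.sq_sqrt hα.le]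
  rw [ent, kl_def (a + b), ← hρ]
  nlinarith

/-- `ent` is symmetric, so both Hellinger terms are available, and together they control the
squared difference of the square-root densities. -/
lemma ent_lower {a α b β : ℝ} (ha : 0 ≤ a) (hα : 0 < α) (hb : 0 ≤ b) (hβ : 0 < β) :
    α * β / (α + β) * (√(a / α) - √(b / β)) ^ 2 ≤ ent a α b β := by
  set ρ := (a + b) / (α + β) with hρ
  have hρ0 : 0 ≤ ρ := by positivity
  have hs : (α + β) * ρ = a + b := by rw [hρ]; field_simp
  have hz : ρ = 0 → a = 0 ∧ b = 0 := by
    intro h; rw [h] at hs; constructor <;> linarith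
  have h1 := kl_ge_hell ha hα.le (fun h => absurd h hα.ne') hρ0 (fun h => (hz h).1)
  have h2 := kl_ge_hell hb hβ.le (fun h => absurd h hβ.ne') hρ0 (fun h => (hz h).2)
  have key : ∀ {a α : ℝ}, 0 < α → (√a - √(α * ρ)) ^ 2 = α * (√(a / α) - √ρ) ^ 2 := by
    intro a α hα
    have : √a = √α * √(a / α) := by
      rw [← Real.sqrt_mul hα.le]; congr 1; field_simp
    rw [this, Real.sqrt_mul hα.le, ← mul_sub, mul_pow, Real.sq_sqrt hα.le]
  rw [key hα] at h1
  rw [key hβ] at h2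
  rw [ent, kl_def (a + b), ← hρ]
  have h4 : α * β / (α + β) * (√(a / α) - √(b / β)) ^ 2 ≤
      α * (√(a / α) - √ρ) ^ 2 + β * (√(b / β) - √ρ) ^ 2 := by
    rw [div_mul_eq_mul_div, div_le_iff₀ (by positivity)]
    nlinarith [sq_nonneg (α * (√(a / α) - √ρ) + β * (√(b / β) - √ρ))]
  nlinarith

/-- The two-point entropy is at most the `χ²`-divergence. -/
lemma ent_le_chi {a α b β : ℝ} (ha : 0 ≤ a) (hα : 0 < α) (hb : 0 ≤ b) (hβ : 0 < β)
    (hab : 0 < a + b) :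
    ent a α b β ≤ (a * β - b * α) ^ 2 / (α * β * (a + b)) := by
  have step : ∀ {x ξ ρ : ℝ}, 0 ≤ x → 0 < ξ → 0 < ρ →
      kl x ξ ≤ x * Real.log ρ + x * (x / (ξ * ρ) - 1) := by
    intro x ξ ρ hx hξ hρ
    rcases hx.eq_or_lt with h | h
    · subst h; simp
    have h1 := Real.log_le_sub_one_of_pos (show 0 < x / (ξ * ρ) by positivity)
    have h2 : Real.log (x / ξ) = Real.log ρ + Real.log (x / (ξ * ρ)) := by
      rw [← Real.log_mul (by positivity) (by positivity)]; congr 1; field_simp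
    rw [kl, h2]; nlinarith
  have hρ : 0 < (a + b) / (α + β) := by positivity
  have h1 := step ha hα hρ
  have h2 := step hb hβ hρ
  have h3 : a * (a / (α * ((a + b) / (α + β))) - 1) + b * (b / (β * ((a + b) / (α + β))) - 1)
      = (a * β - b * α) ^ 2 / (α * β * (a + b)) := by
    field_simp; ring
  rw [ent, kl_def (a + b)]; linarith

/-- The two-point entropy is at most twice the squared difference of the square-root densities,
with no loss from unbalanced reference masses. -/
lemma ent_upper {a α b β : ℝ} (ha : 0 ≤ a) (hα : 0 < α) (hb : 0 ≤ b) (hβ : 0 < β) :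
    ent a α b β ≤ 2 * (α + β) * (√(a / α) - √(b / β)) ^ 2 := by
  rcases (add_nonneg ha hb).eq_or_lt with h | h
  · have h1 : a = 0 := by linarith
    have h2 : b = 0 := by linarith
    subst h1; subst h2; simp [ent]
  refine (ent_le_chi ha hα hb hβ h).trans ?_
  set x := √(a / α) with hx
  set r := √(b / β) with hr
  have hx0 : 0 ≤ x := Real.sqrt_nonneg _
  have hr0 : 0 ≤ r := Real.sqrt_nonneg _
  have ha' : a = α * x ^ 2 := by rw [hx, Real.sq_sqrt (by positivity)]; field_simp
  have hb' : b = β * r ^ 2 := by rw [hr, Real.sq_sqrt (by positivity)]; field_simp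
  rw [div_le_iff₀ (by positivity)]
  have e1 : (a * β - b * α) ^ 2 = (α * β) * ((x - r) ^ 2 * (α * β * (x + r) ^ 2)) := by
    rw [ha', hb']; ring
  have e2 : 2 * (α + β) * (x - r) ^ 2 * (α * β * (a + b)) =
      (α * β) * ((x - r) ^ 2 * (2 * (α + β) * (a + b))) := by ring
  rw [e1, e2]
  refine mul_le_mul_of_nonneg_left (mul_le_mul_of_nonneg_left ?_ (sq_nonneg _)) (by positivity)
  rw [ha', hb']
  have : (x + r) ^ 2 ≤ 2 * x ^ 2 + 2 * r ^ 2 := by nlinarith [sq_nonneg (x - r)]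
  have h5 : 0 ≤ α * β := by positivity
  nlinarith [mul_le_mul_of_nonneg_left this h5, mul_nonneg (sq_nonneg α) (sq_nonneg x),
    mul_nonneg (sq_nonneg β) (sq_nonneg r)]

lemma ent_eq {a α b β : ℝ} (ha : 0 ≤ a) (hα : 0 < α) (hb : 0 ≤ b) (hβ : 0 < β) :
    ent a α b β = kl a (α / (α + β) * (a + b)) + kl b (β / (α + β) * (a + b)) := by
  have step : ∀ {x ξ : ℝ}, 0 ≤ x → 0 < ξ → x ≤ a + b →
      kl x (ξ / (α + β) * (a + b)) = kl x ξ - x * Real.log ((a + b) / (α + β)) := by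
    intro x ξ hx hξ hxab
    rcases hx.eq_or_lt with h | h
    · subst h; simp
    have hab : 0 < a + b := by linarith
    rw [kl, kl, ← mul_sub, ← Real.log_div (by positivity) (by positivity)]
    congr 2; field_simp
  rw [step ha hα (by linarith), step hb hβ (by linarith), ent, kl_def (a + b)]
  ring

/-- Subadditivity of the two-point entropy over pieces with one common ratio `lam` of the
reference masses. -/
lemma ent_sum_le {ι : Type*} (s : Finset ι) (a b z : ι → ℝ) {lam : ℝ} (hl : 0 < lam)
    (ha : ∀ i ∈ s, 0 ≤ a i) (hb : ∀ i ∈ s, 0 ≤ b i) (hz : ∀ i ∈ s, 0 ≤ z i)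
    (haz : ∀ i ∈ s, z i = 0 → a i = 0) (hbz : ∀ i ∈ s, z i = 0 → b i = 0)
    (hpos : 0 < ∑ i ∈ s, z i) :
    ent (∑ i ∈ s, a i) (lam * ∑ i ∈ s, z i) (∑ i ∈ s, b i) (∑ i ∈ s, z i) ≤
      ∑ i ∈ s, ent (a i) (lam * z i) (b i) (z i) := by
  have hterm : ∀ i ∈ s, ent (a i) (lam * z i) (b i) (z i) =
      kl (a i) (lam / (lam + 1) * (a i + b i)) + kl (b i) (1 / (lam + 1) * (a i + b i)) := by
    intro i hi
    rcases (hz i hi).eq_or_lt with h | h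
    · rw [haz i hi h.symm, hbz i hi h.symm]; simp [ent]
    · rw [ent_eq (ha i hi) (by positivity) (hb i hi) h]
      congr 2 <;> congr 1 <;> field_simp
  rw [sum_congr rfl hterm, sum_add_distrib,
    ent_eq (sum_nonneg ha) (by positivity) (sum_nonneg hb) hpos]
  have e1 : lam * (∑ i ∈ s, z i) / (lam * (∑ i ∈ s, z i) + ∑ i ∈ s, z i) *
      (∑ i ∈ s, a i + ∑ i ∈ s, b i) = ∑ i ∈ s, lam / (lam + 1) * (a i + b i) := by
    rw [← mul_sum, sum_add_distrib]; congr 1; field_simp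
  have e2 : (∑ i ∈ s, z i) / (lam * (∑ i ∈ s, z i) + ∑ i ∈ s, z i) *
      (∑ i ∈ s, a i + ∑ i ∈ s, b i) = ∑ i ∈ s, 1 / (lam + 1) * (a i + b i) := by
    rw [← mul_sum, sum_add_distrib]; congr 1; field_simp
  rw [e1, e2]
  have hc1 : lam / (lam + 1) ≠ 0 := by positivity
  have hc2 : 1 / (lam + 1) ≠ 0 := by positivity
  have hnn : ∀ i ∈ s, 0 ≤ a i + b i := fun i hi => add_nonneg (ha i hi) (hb i hi)
  refine add_le_add (log_sum s _ _ ha ?_ ?_) (log_sum s _ _ hb ?_ ?_)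
  · intro i hi; have := hnn i hi; positivity
  · intro i hi h
    have := (mul_eq_zero.1 h).resolve_left hc1
    linarith [ha i hi, hb i hi]
  · intro i hi; have := hnn i hi; positivity
  · intro i hi h
    have := (mul_eq_zero.1 h).resolve_left hc2
    linarith [ha i hi, hb i hi]

/-- The three-piece comparison behind the local recursion: the mass `a` (edge present) is compared
with `b + c` (edge absent) through the intermediate mass `b` (edge absent but addable). -/
lemma ent_three {a b c zb zc lam γ : ℝ} (hl : 0 < lam) (ha : 0 ≤ a) (hb : 0 ≤ b) (hc : 0 ≤ c)
    (hzb : 0 < zb) (hzc : 0 ≤ zc) (hcz : zc = 0 → c = 0) (hγ : zb + zc ≤ γ * zb) :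
    ent a (lam * zb) (b + c) (zb + zc) ≤
      4 * (lam + γ) * ((1 + lam) / lam) * (ent a (lam * zb) b zb + ent b zb c zc) := by
  have h1 := ent_upper ha (show 0 < lam * zb by positivity) (show 0 ≤ b + c by positivity)
    (show 0 < zb + zc by positivity)
  have h2 := ent_lower ha (show 0 < lam * zb by positivity) hb hzb
  have h3 := ent_lower_one hb hzb hc hzc hcz
  set x := √(a / (lam * zb))
  set y := √(b / zb)
  set r := √((b + c) / (zb + zc))
  have e : lam * zb * zb / (lam * zb + zb) = lam / (1 + lam) * zb := by field_simp; ring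
  rw [e] at h2
  have hγ0 : 0 ≤ γ := by
    by_contra h
    have : γ * zb < 0 := mul_neg_of_neg_of_pos (not_le.1 h) hzb
    linarith
  have hκ : 1 ≤ (1 + lam) / lam := by rw [le_div_iff₀ hl]; linarith
  have h4 : zb * (x - y) ^ 2 ≤ (1 + lam) / lam * ent a (lam * zb) b zb := by
    have := mul_le_mul_of_nonneg_left h2 (show 0 ≤ (1 + lam) / lam by positivity)
    calc zb * (x - y) ^ 2 = (1 + lam) / lam * (lam / (1 + lam) * zb * (x - y) ^ 2) := by
          field_simp
      _ ≤ _ := this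
  have h5 : zb * (y - r) ^ 2 ≤ (1 + lam) / lam * ent b zb c zc := by
    have h0 : 0 ≤ ent b zb c zc := le_trans (by positivity) h3
    nlinarith
  have h6 : (x - r) ^ 2 ≤ 2 * ((x - y) ^ 2 + (y - r) ^ 2) := by
    nlinarith [sq_nonneg ((x - y) - (y - r))]
  calc ent a (lam * zb) (b + c) (zb + zc) ≤ 2 * (lam * zb + (zb + zc)) * (x - r) ^ 2 := h1
    _ ≤ 2 * (lam * zb + γ * zb) * (2 * ((x - y) ^ 2 + (y - r) ^ 2)) := by gcongr
    _ = 4 * (lam + γ) * (zb * (x - y) ^ 2 + zb * (y - r) ^ 2) := by ring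
    _ ≤ 4 * (lam + γ) * ((1 + lam) / lam * ent a (lam * zb) b zb +
          (1 + lam) / lam * ent b zb c zc) := by gcongr
    _ = _ := by ring

/-! ### Sums over subsets and random subsets -/

lemma sum_powerset_union {α : Type*} [DecidableEq α] (U W : Finset α) (h : Disjoint U W)
    (g : Finset α → ℝ) :
    ∑ x ∈ (U ∪ W).powerset, g x = ∑ τ ∈ U.powerset, ∑ A ∈ W.powerset, g (τ ∪ A) := by
  induction W using Finset.induction_on generalizing g with
  | empty => simp
  | insert a W haW ih =>
    have h1 : Disjoint U W := h.mono_right (subset_insert _ _)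
    have h2 : a ∉ U := fun ha => disjoint_left.1 h ha (mem_insert_self _ _)
    rw [union_insert, sum_powerset_insert (by simp [haW, h2]), ih h1, ih h1, ← sum_add_distrib]
    refine sum_congr rfl fun τ _ => ?_
    rw [sum_powerset_insert haW]
    simp only [union_insert]

/-- The average of `h S` over a random subset `S` of `U` that keeps each element independently
with probability `θ`. -/
noncomputable def bern {α : Type*} [DecidableEq α] (θ : ℝ) (U : Finset α) (h : Finset α → ℝ) : ℝ :=
  ∑ S ∈ U.powerset, θ ^ S.card * (1 - θ) ^ (U \ S).card * h S

section bern
variable {α : Type*} [DecidableEq α]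

lemma bern_empty (θ : ℝ) (h : Finset α → ℝ) : bern θ ∅ h = h ∅ := by simp [bern]

lemma bern_insert (θ : ℝ) {U : Finset α} {a : α} (ha : a ∉ U) (h : Finset α → ℝ) :
    bern θ (insert a U) h = (1 - θ) * bern θ U h + θ * bern θ U (fun S => h (insert a S)) := by
  rw [bern, sum_powerset_insert ha, bern, bern, mul_sum, mul_sum]
  congr 1
  · refine sum_congr rfl fun S hS => ?_
    have haS : a ∉ S := fun h' => ha (mem_powerset.1 hS h')
    rw [insert_sdiff_of_notMem _ haS, card_insert_of_notMem (by simp [ha])]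
    ring
  · refine sum_congr rfl fun S hS => ?_
    have haS : a ∉ S := fun h' => ha (mem_powerset.1 hS h')
    rw [insert_sdiff_insert, sdiff_insert_of_notMem ha, card_insert_of_notMem haS]
    ring

lemma bern_add (θ : ℝ) (U : Finset α) (g h : Finset α → ℝ) :
    bern θ U (fun S => g S + h S) = bern θ U g + bern θ U h := by
  simp only [bern, mul_add, sum_add_distrib]

lemma bern_sub (θ : ℝ) (U : Finset α) (g h : Finset α → ℝ) :
    bern θ U (fun S => g S - h S) = bern θ U g - bern θ U h := by
  simp only [bern, mul_sub, sum_sub_distrib]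

lemma bern_mul (θ c : ℝ) (U : Finset α) (h : Finset α → ℝ) :
    bern θ U (fun S => c * h S) = c * bern θ U h := by
  simp only [bern, mul_sum]
  exact sum_congr rfl fun S _ => by ring

lemma bern_sum {ι : Type*} (θ : ℝ) (U : Finset α) (s : Finset ι) (h : ι → Finset α → ℝ) :
    bern θ U (fun S => ∑ i ∈ s, h i S) = ∑ i ∈ s, bern θ U (h i) := by
  simp only [bern, mul_sum]
  exact sum_comm

lemma bern_const (θ c : ℝ) (U : Finset α) : bern θ U (fun _ => c) = c := by
  induction U using Finset.induction_on with
  | empty => simp [bern_empty]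
  | insert a U ha ih => rw [bern_insert θ ha, ih]; ring

lemma bern_mono {θ : ℝ} (h0 : 0 ≤ θ) (h1 : θ ≤ 1) (U : Finset α) {g h : Finset α → ℝ}
    (hgh : ∀ S ⊆ U, g S ≤ h S) : bern θ U g ≤ bern θ U h := by
  have : 0 ≤ 1 - θ := by linarith
  refine sum_le_sum fun S hS => mul_le_mul_of_nonneg_left (hgh S (mem_powerset.1 hS)) ?_
  positivity

lemma bern_one (U : Finset α) (h : Finset α → ℝ) : bern 1 U h = h U := by
  induction U using Finset.induction_on generalizing h with
  | empty => simp [bern_empty]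
  | insert a U ha ih => rw [bern_insert 1 ha, ih]; simp [ih]

lemma bern_sdiff (θ : ℝ) (U N : Finset α) (h : Finset α → ℝ) :
    bern θ U (fun S => h (S \ N)) = bern θ (U \ N) h := by
  induction U using Finset.induction_on generalizing h with
  | empty => simp [bern_empty]
  | insert a U ha ih =>
    rw [bern_insert θ ha, ih]
    by_cases haN : a ∈ N
    · simp only [insert_sdiff_of_mem _ haN]
      rw [ih]; ring
    · simp only [insert_sdiff_of_notMem _ haN]
      rw [ih (fun S => h (insert a S)), bern_insert θ (by simp [ha])]

lemma bern_insert_sub (θ : ℝ) {U : Finset α} {a : α} (ha : a ∉ U) (h : Finset α → ℝ) :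
    bern θ (insert a U) h - bern θ U h =
      θ * bern θ U (fun S => h (insert a S) - h S) := by
  rw [bern_insert θ ha, bern_sub]; ring

/-- Russo's formula. -/
lemma bern_hasDerivAt (U : Finset α) (h : Finset α → ℝ) (θ : ℝ) :
    HasDerivAt (fun t => bern t U h)
      (∑ e ∈ U, bern θ (U.erase e) (fun S => h (insert e S) - h S)) θ := by
  induction U using Finset.induction_on generalizing h with
  | empty => simpa [bern_empty] using hasDerivAt_const θ (h ∅)
  | insert a U ha ih =>
    have e1 : (fun t => bern t (insert a U) h) =
        fun t => (1 - t) * bern t U h + t * bern t U (fun S => h (insert a S)) := by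
      funext t; exact bern_insert t ha h
    rw [e1]
    have d := (((hasDerivAt_const θ (1:ℝ)).sub (hasDerivAt_id θ)).mul (ih h)).add
      ((hasDerivAt_id θ).mul (ih (fun S => h (insert a S))))
    refine HasDerivAt.congr_deriv d ?_
    rw [sum_insert ha, erase_insert ha, bern_sub]
    have e2 : ∑ e ∈ U, bern θ ((insert a U).erase e) (fun S => h (insert e S) - h S) =
        ∑ e ∈ U, ((1 - θ) * bern θ (U.erase e) (fun S => h (insert e S) - h S) +
          θ * bern θ (U.erase e) (fun S => h (insert a (insert e S)) - h (insert a S))) := by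
      refine sum_congr rfl fun e he => ?_
      have hne : a ≠ e := fun h' => ha (h' ▸ he)
      rw [erase_insert_of_ne hne, bern_insert θ (by simp [ha])]
      simp only [Finset.insert_comm e a]
    rw [e2, sum_add_distrib, ← mul_sum, ← mul_sum]
    simp only [id, Pi.sub_apply]
    ring

/-- If removing elements one at a time costs at most a factor `K` in total, the average over
random subsets of density `θ` loses at most `θ ^ K`: by Russo's formula,
`θ F' ≤ K F`, so `F θ^{-K}` is nonincreasing. -/
lemma bern_decay (E : Finset α) (H : Finset α → ℝ) (K : ℕ)
    (hK : ∀ S ⊆ E, ∑ e ∈ E, (H S - H (S.erase e)) ≤ K * H S) {θ : ℝ} (h0 : 0 < θ) (h1 : θ ≤ 1) :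
    θ ^ K * H E ≤ bern θ E H := by
  have hder : ∀ t : ℝ, 0 < t → t ≤ 1 →
      t * (∑ e ∈ E, bern t (E.erase e) (fun S => H (insert e S) - H S)) ≤ K * bern t E H := by
    intro t ht ht1
    have e1 : t * (∑ e ∈ E, bern t (E.erase e) (fun S => H (insert e S) - H S)) =
        bern t E (fun S => ∑ e ∈ E, (H S - H (S.erase e))) := by
      rw [bern_sum, mul_sum]
      refine sum_congr rfl fun e he => ?_
      rw [← bern_insert_sub t (notMem_erase e E), insert_erase he, bern_sub]
      congr 1
      have := bern_sdiff t E {e} H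
      simp only [sdiff_singleton_eq_erase] at this
      rw [this]
    rw [e1, ← bern_mul]
    exact bern_mono ht.le ht1 E hK
  have hanti : AntitoneOn (fun t : ℝ => bern t E H * (t ^ K)⁻¹) (Set.Icc θ 1) := by
    have hd : ∀ t : ℝ, 0 < t → HasDerivAt (fun t : ℝ => bern t E H * (t ^ K)⁻¹)
        ((∑ e ∈ E, bern t (E.erase e) (fun S => H (insert e S) - H S)) * (t ^ K)⁻¹ +
          bern t E H * (-(K * t ^ (K - 1)) / (t ^ K) ^ 2)) t := by
      intro t ht
      exact (bern_hasDerivAt E H t).mul ((hasDerivAt_pow K t).inv (by positivity))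
    refine antitoneOn_of_deriv_nonpos (convex_Icc _ _) ?_ ?_ ?_
    · intro t ht
      exact (hd t (h0.trans_le ht.1)).continuousAt.continuousWithinAt
    · intro t ht
      rw [interior_Icc] at ht
      exact (hd t (h0.trans ht.1)).differentiableAt.differentiableWithinAt
    · intro t ht
      rw [interior_Icc] at ht
      have ht0 := h0.trans ht.1
      rw [(hd t ht0).deriv]
      have hx := hder t ht0 ht.2.le
      have e2 : bern t E H * (-(K * t ^ (K - 1)) / (t ^ K) ^ 2) =
          -(K * bern t E H) * (t ^ K)⁻¹ * t⁻¹ := by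
        rcases K with _ | k
        · simp
        · simp only [Nat.add_sub_cancel, pow_succ]
          field_simp
      rw [e2]
      have e3 : (∑ e ∈ E, bern t (E.erase e) (fun S => H (insert e S) - H S)) * (t ^ K)⁻¹ +
          -(K * bern t E H) * (t ^ K)⁻¹ * t⁻¹ =
          (t * (∑ e ∈ E, bern t (E.erase e) (fun S => H (insert e S) - H S)) -
            K * bern t E H) * ((t ^ K)⁻¹ * t⁻¹) := by
        field_simp
        ring
      rw [e3]
      exact mul_nonpos_of_nonpos_of_nonneg (by linarith) (by positivity)
  have := hanti (Set.left_mem_Icc.2 h1) (Set.right_mem_Icc.2 h1) h1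
  simp only [one_pow, inv_one, mul_one, bern_one] at this
  rw [← div_eq_mul_inv, le_div_iff₀ (by positivity)] at this
  linarith

/-- Subcritical exploration. Suppose removing `e` costs, on average, at most `κ` times a local term
`L e` plus `κ` times the cost of then removing the neighbours `N e`. If neighbourhoods have at most
`D` elements and `κ D ≤ 1/2`, the geometric series over exploration paths converges and the total is
at most `2 κ ∑ L`. -/
lemma explore (E : Finset α) (F : Finset α → ℝ) (L : α → ℝ) (N : α → Finset α) (κ : ℝ) (D : ℕ)
    (hκ : 0 ≤ κ) (hL : ∀ e, 0 ≤ L e) (hF0 : F ∅ = 0)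
    (hNE : ∀ e, N e ⊆ E)
    (hD : ∀ n ∈ E, (E.filter fun e => n ∈ N e).card ≤ D)
    (hκD : κ * D ≤ 1 / 2)
    (hrec : ∀ U ⊆ E, ∀ e ∈ U, F U - F (U.erase e) ≤
      κ * (L e + (F (U.erase e) - F (U.erase e \ N e)))) :
    F E ≤ 2 * κ * ∑ e ∈ E, L e := by
  let h : ℕ → α → ℝ := fun k => Nat.rec (fun _ => 0) (fun _ g e => κ * (L e + ∑ n ∈ N e, g n)) k
  have h0 : ∀ e, h 0 e = 0 := fun _ => rfl
  have hs : ∀ k e, h (k + 1) e = κ * (L e + ∑ n ∈ N e, h k n) := fun _ _ => rfl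
  have hnn : ∀ k e, 0 ≤ h k e := by
    intro k
    induction k with
    | zero => intro e; rw [h0]
    | succ k ih =>
      intro e
      rw [hs]
      exact mul_nonneg hκ (add_nonneg (hL e) (sum_nonneg fun n _ => ih n))
  have hclaim : ∀ k, ∀ U ⊆ E, U.card ≤ k → ∀ e ∈ U, F U - F (U.erase e) ≤ h k e := by
    intro k
    induction k with
    | zero =>
      intro U _ hc e he
      rw [card_eq_zero.1 (Nat.le_zero.1 hc)] at he
      simp at he
    | succ k ih =>
      intro U hU hc e he
      have htel : ∀ M : Finset α, F (U.erase e) - F (U.erase e \ M) ≤ ∑ n ∈ M, h k n := by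
        intro M
        induction M using Finset.induction_on with
        | empty => simp
        | insert a M haM ihM =>
          rw [sum_insert haM, sdiff_insert]
          by_cases ha : a ∈ U.erase e \ M
          · have := ih (U.erase e \ M) ((sdiff_subset.trans (erase_subset _ _)).trans hU)
              ((card_le_card sdiff_subset).trans (by rw [card_erase_of_mem he]; omega)) a ha
            linarith
          · rw [erase_eq_of_notMem ha]
            linarith [hnn k a]
      rw [hs]
      refine (hrec U hU e he).trans (mul_le_mul_of_nonneg_left ?_ hκ)
      linarith [htel (N e)]
  have hfinal : ∀ M : Finset α, F E - F (E \ M) ≤ ∑ n ∈ M, h E.card n := by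
    intro M
    induction M using Finset.induction_on with
    | empty => simp
    | insert a M haM ihM =>
      rw [sum_insert haM, sdiff_insert]
      by_cases ha : a ∈ E \ M
      · have := hclaim E.card (E \ M) sdiff_subset (card_le_card sdiff_subset) a ha
        linarith
      · rw [erase_eq_of_notMem ha]
        linarith [hnn E.card a]
  have hsum : ∀ k, ∑ e ∈ E, h k e ≤ 2 * κ * ∑ e ∈ E, L e := by
    have hLs : 0 ≤ ∑ e ∈ E, L e := sum_nonneg fun e _ => hL e
    intro k
    induction k with
    | zero => simp only [h0, sum_const_zero]; positivity
    | succ k ih =>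
      simp only [hs]
      rw [← mul_sum, sum_add_distrib]
      have e1 : ∑ e ∈ E, ∑ n ∈ N e, h k n =
          ∑ n ∈ E, ((E.filter fun e => n ∈ N e).card : ℝ) * h k n := by
        have : ∀ e ∈ E, ∑ n ∈ N e, h k n = ∑ n ∈ E, if n ∈ N e then h k n else 0 := by
          intro e _
          rw [← sum_filter]
          congr 1
          ext n
          simp only [mem_filter]
          exact ⟨fun hn => ⟨hNE e hn, hn⟩, fun hn => hn.2⟩
        rw [sum_congr rfl this, sum_comm]
        refine sum_congr rfl fun n _ => ?_
        rw [← sum_filter, sum_const, nsmul_eq_mul]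
      have e2 : ∑ n ∈ E, ((E.filter fun e => n ∈ N e).card : ℝ) * h k n ≤
          D * ∑ n ∈ E, h k n := by
        rw [mul_sum]
        exact sum_le_sum fun n hn => mul_le_mul_of_nonneg_right (by exact_mod_cast hD n hn) (hnn k n)
      have hx : 0 ≤ ∑ n ∈ E, h k n := sum_nonneg fun n _ => hnn k n
      rw [e1]
      calc κ * (∑ e ∈ E, L e + ∑ n ∈ E, ((E.filter fun e => n ∈ N e).card : ℝ) * h k n)
          ≤ κ * (∑ e ∈ E, L e + D * ∑ n ∈ E, h k n) := by gcongr
        _ = κ * ∑ e ∈ E, L e + (κ * D) * ∑ n ∈ E, h k n := by ring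
        _ ≤ κ * ∑ e ∈ E, L e + 1 / 2 * (2 * κ * ∑ e ∈ E, L e) := by gcongr
        _ = _ := by ring
  have := hfinal E
  rw [sdiff_self, bot_eq_empty, hF0] at this
  linarith [hsum E.card]

end bern

/-! ### Weighted matchings: influences and covariances -/

section matchings
variable {V : Type} [Fintype V] [DecidableEq V]

/-- Two edges touch when they share a vertex; every edge touches itself. -/
def touch (e f : Sym2 V) : Prop := ∃ v, v ∈ e ∧ v ∈ f

/-- No two distinct members of `M` share a vertex. -/
def PD (M : Finset (Sym2 V)) : Prop := ∀ e ∈ M, ∀ f ∈ M, e ≠ f → ∀ v : V, v ∈ e → v ∉ f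

/-- The weight `∏ w e` of a matching for edge-dependent fugacities `w`, and zero for sets of edges
that are not matchings. An edge is absent from the graph when its fugacity is zero. -/
noncomputable def wt (w : Sym2 V → ℝ) (M : Finset (Sym2 V)) : ℝ :=
  if PD M then ∏ e ∈ M, w e else 0

/-- Fugacities after deletion of the vertex `u`. -/
noncomputable def delV (w : Sym2 V → ℝ) (u : V) : Sym2 V → ℝ := fun e => if u ∈ e then 0 else w e

/-- Fugacities after deletion of both endpoints of `e`. -/
noncomputable def delE (w : Sym2 V → ℝ) (e : Sym2 V) : Sym2 V → ℝ :=
  fun f => if touch e f then 0 else w f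

/-- The monomer-dimer partition function. -/
noncomputable def pf (w : Sym2 V → ℝ) : ℝ := ∑ A, wt w A

/-- Expectation under the monomer-dimer distribution with fugacities `w`. -/
noncomputable def ex (w : Sym2 V → ℝ) (g : Finset (Sym2 V) → ℝ) : ℝ := (∑ A, wt w A * g A) / pf w

/-- Indicator that the edge `e` is occupied. -/
noncomputable def ind (e : Sym2 V) (A : Finset (Sym2 V)) : ℝ := if e ∈ A then 1 else 0

/-- Fugacities are nonnegative with total at most `B` around every vertex. -/
def Bdd (w : Sym2 V → ℝ) (B : ℝ) : Prop :=
  (∀ e, 0 ≤ w e) ∧ ∀ u : V, ∑ e with u ∈ e, w e ≤ B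

lemma touch_self (e : Sym2 V) : touch e e := by
  induction e with | _ x y => exact ⟨x, by simp, by simp⟩

lemma touch_comm {e f : Sym2 V} : touch e f ↔ touch f e :=
  ⟨fun ⟨v, h⟩ => ⟨v, h.symm⟩, fun ⟨v, h⟩ => ⟨v, h.symm⟩⟩

lemma PD_empty : PD (∅ : Finset (Sym2 V)) := by simp [PD]

lemma PD.mono {M N : Finset (Sym2 V)} (h : PD N) (hMN : M ⊆ N) : PD M :=
  fun e he f hf => h e (hMN he) f (hMN hf)

lemma PD_insert {e : Sym2 V} {B : Finset (Sym2 V)} (he : e ∉ B) :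
    PD (insert e B) ↔ PD B ∧ ∀ f ∈ B, ¬ touch e f := by
  constructor
  · intro h
    refine ⟨h.mono (subset_insert _ _), fun f hf ⟨v, hv1, hv2⟩ => ?_⟩
    exact h e (mem_insert_self _ _) f (mem_insert_of_mem hf) (fun h' => he (h' ▸ hf)) v hv1 hv2
  · rintro ⟨h1, h2⟩ a ha b hb hab v hva hvb
    rcases mem_insert.1 ha with rfl | ha'
    · rcases mem_insert.1 hb with rfl | hb'
      · exact hab rfl
      · exact h2 b hb' ⟨v, hva, hvb⟩
    · rcases mem_insert.1 hb with rfl | hb'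
      · exact h2 a ha' ⟨v, hvb, hva⟩
      · exact h1 a ha' b hb' hab v hva hvb

lemma wt_nonneg {w : Sym2 V → ℝ} (hw : ∀ e, 0 ≤ w e) (A : Finset (Sym2 V)) : 0 ≤ wt w A := by
  unfold wt; split_ifs
  · exact prod_nonneg fun e _ => hw e
  · exact le_rfl

lemma wt_empty (w : Sym2 V → ℝ) : wt w ∅ = 1 := by simp [wt, PD_empty]

lemma wt_insert (w : Sym2 V → ℝ) {e : Sym2 V} {B : Finset (Sym2 V)} (he : e ∉ B) :
    wt w (insert e B) = w e * wt (delE w e) B := by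
  unfold wt
  rw [PD_insert he, prod_insert he]
  by_cases h1 : PD B
  · by_cases h2 : ∀ f ∈ B, ¬ touch e f
    · rw [if_pos ⟨h1, h2⟩, if_pos h1]
      congr 1
      exact prod_congr rfl fun f hf => by rw [delE, if_neg (h2 f hf)]
    · rw [if_neg (fun h => h2 h.2), if_pos h1]
      push Not at h2
      obtain ⟨f, hf, ht⟩ := h2
      rw [prod_eq_zero hf (by rw [delE, if_pos ht]), mul_zero]
  · rw [if_neg (fun h => h1 h.1), if_neg h1, mul_zero]

lemma wt_eq_zero {w : Sym2 V → ℝ} {e : Sym2 V} {B : Finset (Sym2 V)} (he : e ∈ B) (h : w e = 0) :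
    wt w B = 0 := by
  unfold wt; split_ifs
  · exact prod_eq_zero he h
  · rfl

lemma wt_mono {w w' : Sym2 V → ℝ} (h0 : ∀ e, 0 ≤ w e) (h : ∀ e, w e ≤ w' e)
    (A : Finset (Sym2 V)) : wt w A ≤ wt w' A := by
  unfold wt; split_ifs
  · exact prod_le_prod (fun e _ => h0 e) fun e _ => h e
  · exact le_rfl

lemma delE_self (w : Sym2 V → ℝ) (e : Sym2 V) : delE w e e = 0 := by
  rw [delE, if_pos (touch_self e)]

lemma delE_mk (w : Sym2 V → ℝ) (u v : V) : delE w s(u, v) = delV (delV w u) v := by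
  funext f
  have : touch s(u, v) f ↔ u ∈ f ∨ v ∈ f := by
    constructor
    · rintro ⟨x, hx, hf⟩
      rcases Sym2.mem_iff.1 hx with rfl | rfl
      · exact Or.inl hf
      · exact Or.inr hf
    · rintro (h | h)
      · exact ⟨u, by simp, h⟩
      · exact ⟨v, by simp, h⟩
  simp only [delE, delV, this]
  by_cases h1 : u ∈ f <;> by_cases h2 : v ∈ f <;> simp [h1, h2]

lemma delV_le {w : Sym2 V → ℝ} (hw : ∀ e, 0 ≤ w e) (u : V) (e : Sym2 V) : delV w u e ≤ w e := by
  unfold delV; split_ifs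
  · exact hw e
  · exact le_rfl

lemma delV_nonneg {w : Sym2 V → ℝ} (hw : ∀ e, 0 ≤ w e) (u : V) (e : Sym2 V) : 0 ≤ delV w u e := by
  unfold delV; split_ifs
  · exact le_rfl
  · exact hw e

lemma Bdd.delV {w : Sym2 V → ℝ} {B : ℝ} (h : Bdd w B) (u : V) : Bdd (delV w u) B :=
  ⟨delV_nonneg h.1 u, fun x => (sum_le_sum fun e _ => delV_le h.1 u e).trans (h.2 x)⟩

lemma Bdd.delE {w : Sym2 V → ℝ} {B : ℝ} (h : Bdd w B) (e : Sym2 V) : Bdd (delE w e) B := by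
  induction e with | _ x y => rw [delE_mk]; exact (h.delV x).delV y

lemma pf_pos {w : Sym2 V → ℝ} (hw : ∀ e, 0 ≤ w e) : 0 < pf w :=
  sum_pos' (fun A _ => wt_nonneg hw A) ⟨∅, mem_univ _, by rw [wt_empty]; exact one_pos⟩

lemma pf_mono {w w' : Sym2 V → ℝ} (h0 : ∀ e, 0 ≤ w e) (h : ∀ e, w e ≤ w' e) : pf w ≤ pf w' :=
  sum_le_sum fun A _ => wt_mono h0 h A

lemma sum_univ_insert {α : Type*} [Fintype α] [DecidableEq α] (e : α) (F : Finset α → ℝ) :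
    ∑ A, F A = ∑ A ∈ (univ.erase e).powerset, (F A + F (insert e A)) := by
  rw [sum_add_distrib, ← sum_powerset_insert (notMem_erase e univ), insert_erase (mem_univ e),
    powerset_univ]

lemma sum_ind (w : Sym2 V → ℝ) (e : Sym2 V) (g : Finset (Sym2 V) → ℝ) :
    ∑ A, wt w A * (ind e A * g A) = w e * ∑ A, wt (delE w e) A * g (insert e A) := by
  rw [sum_univ_insert e, sum_univ_insert e, mul_sum]
  refine sum_congr rfl fun A hA => ?_
  have heA : e ∉ A := fun h => by simpa using mem_powerset.1 hA h
  rw [wt_insert w heA, wt_eq_zero (mem_insert_self e A) (delE_self w e)]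
  simp [ind, heA]
  ring

/-- A matching either leaves `u` uncovered or contains exactly one edge at `u`. -/
lemma wt_split (w : Sym2 V → ℝ) (u : V) (A : Finset (Sym2 V)) :
    wt w A = wt (delV w u) A + ∑ e with u ∈ e, wt w A * ind e A := by
  by_cases hPD : PD A
  swap
  · simp [wt, hPD]
  by_cases h : ∃ e ∈ A, u ∈ e
  · obtain ⟨e, heA, hue⟩ := h
    rw [wt_eq_zero (w := delV w u) heA (by simp [delV, hue]), zero_add, sum_eq_single e]
    · simp [ind, heA]
    · intro f hf hfe
      have : f ∉ A := fun hfA => hPD f hfA e heA hfe u (by simpa using hf) hue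
      simp [ind, this]
    · intro h; simp [hue] at h
  · push Not at h
    rw [sum_eq_zero, add_zero]
    · unfold wt
      rw [if_pos hPD, if_pos hPD]
      exact prod_congr rfl fun e he => by rw [delV, if_neg (h e he)]
    · intro f hf
      have : f ∉ A := fun hfA => h f hfA (by simpa using hf)
      simp [ind, this]

lemma expand (w : Sym2 V → ℝ) (u : V) (g : Finset (Sym2 V) → ℝ) :
    ∑ A, wt w A * g A = ∑ A, wt (delV w u) A * g A +
      ∑ e with u ∈ e, w e * ∑ A, wt (delE w e) A * g (insert e A) := by
  have : ∀ A, wt w A * g A = wt (delV w u) A * g A +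
      ∑ e with u ∈ e, wt w A * (ind e A * g A) := by
    intro A
    conv_lhs => rw [wt_split w u A]
    rw [add_mul, sum_mul]
    congr 1
    exact sum_congr rfl fun e _ => by ring
  rw [sum_congr rfl fun A _ => this A, sum_add_distrib, sum_comm]
  congr 1
  exact sum_congr rfl fun e _ => sum_ind w e g

lemma pf_expand (w : Sym2 V → ℝ) (u : V) :
    pf w = pf (delV w u) + ∑ e with u ∈ e, w e * pf (delE w e) := by
  have := expand w u (fun _ => 1)
  simpa [pf] using this

lemma ex_ind (w : Sym2 V → ℝ) (e : Sym2 V) : ex w (ind e) = w e * pf (delE w e) / pf w := by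
  have := sum_ind w e (fun _ => 1)
  simp only [mul_one] at this
  rw [ex, this]
  rfl

lemma ex_ind_mul {w : Sym2 V → ℝ} (hw : ∀ e, 0 ≤ w e) (e : Sym2 V) (g : Finset (Sym2 V) → ℝ) :
    ex w (fun A => ind e A * g A) = ex w (ind e) * ex (delE w e) (fun A => g (insert e A)) := by
  have h0 : 0 < pf (delE w e) := pf_pos fun f => by
    unfold delE; split_ifs
    · exact le_rfl
    · exact hw f
  rw [ex_ind, ex, sum_ind, ex]
  field_simp

lemma ex_nonneg {w : Sym2 V → ℝ} (hw : ∀ e, 0 ≤ w e) {g : Finset (Sym2 V) → ℝ}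
    (hg : ∀ A, 0 ≤ g A) : 0 ≤ ex w g :=
  div_nonneg (sum_nonneg fun A _ => mul_nonneg (wt_nonneg hw A) (hg A)) (pf_pos hw).le

lemma ind_nonneg (e : Sym2 V) (A : Finset (Sym2 V)) : 0 ≤ ind e A := by
  unfold ind; split_ifs <;> norm_num

lemma ex_add (w : Sym2 V → ℝ) (g h : Finset (Sym2 V) → ℝ) :
    ex w (fun A => g A + h A) = ex w g + ex w h := by
  simp only [ex, mul_add, sum_add_distrib, add_div]

lemma ex_mul (w : Sym2 V → ℝ) (c : ℝ) (g : Finset (Sym2 V) → ℝ) :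
    ex w (fun A => c * g A) = c * ex w g := by
  simp only [ex, ← mul_div_assoc, mul_sum]
  congr 1
  exact sum_congr rfl fun A _ => by ring

lemma ex_sum {ι : Type*} (w : Sym2 V → ℝ) (s : Finset ι) (g : ι → Finset (Sym2 V) → ℝ) :
    ex w (fun A => ∑ i ∈ s, g i A) = ∑ i ∈ s, ex w (g i) := by
  simp only [ex, mul_sum, ← sum_div]
  rw [sum_comm]

lemma ex_const {w : Sym2 V → ℝ} (hw : ∀ e, 0 ≤ w e) (c : ℝ) : ex w (fun _ => c) = c := by
  rw [ex, ← sum_mul]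
  exact mul_div_cancel_left₀ _ (pf_pos hw).ne'

lemma ex_ind_insert {w : Sym2 V → ℝ} (hw : ∀ e, 0 ≤ w e) (e f : Sym2 V) :
    ex (delE w e) (fun A => ind f (insert e A)) =
      (if f = e then 1 else 0) + ex (delE w e) (ind f) := by
  have hd : ∀ f, 0 ≤ delE w e f := fun f => by
    unfold delE; split_ifs
    · exact le_rfl
    · exact hw f
  by_cases h : f = e
  · subst h
    rw [ex_ind, delE_self]
    simp only [ind, mem_insert_self, if_true]
    rw [ex_const hd]
    simp
  · rw [if_neg h, zero_add]
    congr 1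
    funext A
    simp [ind, h]

/-- A vertex is unmatched with probability at least `1 / (1 + B)`. -/
lemma pf_le_delV {w : Sym2 V → ℝ} {B : ℝ} (h : Bdd w B) (u : V) :
    pf w ≤ (1 + B) * pf (delV w u) := by
  rw [pf_expand w u, add_mul, one_mul]
  refine add_le_add le_rfl ?_
  calc ∑ e with u ∈ e, w e * pf (delE w e) ≤ ∑ e with u ∈ e, w e * pf (delV w u) := by
        refine sum_le_sum fun e he => mul_le_mul_of_nonneg_left ?_ (h.1 e)
        have hue : u ∈ e := by simpa using he
        obtain ⟨v, rfl⟩ := Sym2.mem_iff_exists.1 hue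
        rw [delE_mk]
        exact pf_mono ((h.delV u).delV v).1 (delV_le (h.delV u).1 v)
    _ = (∑ e with u ∈ e, w e) * pf (delV w u) := by rw [sum_mul]
    _ ≤ B * pf (delV w u) := mul_le_mul_of_nonneg_right (h.2 u) (pf_pos (h.delV u).1).le

lemma Bdd.nonneg {w : Sym2 V → ℝ} {B : ℝ} (h : Bdd w B) (u : V) : 0 ≤ B :=
  (sum_nonneg fun e _ => h.1 e).trans (h.2 u)

lemma pf_le_delE {w : Sym2 V → ℝ} {B : ℝ} (h : Bdd w B) (e : Sym2 V) :
    pf w ≤ (1 + B) ^ 2 * pf (delE w e) := by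
  induction e with | _ u v =>
  rw [delE_mk]
  have h1 := pf_le_delV h u
  have h2 := pf_le_delV (h.delV u) v
  have := h.nonneg u
  calc pf w ≤ (1 + B) * pf (delV w u) := h1
    _ ≤ (1 + B) * ((1 + B) * pf (delV (delV w u) v)) := by gcongr
    _ = _ := by ring

lemma sum_ex_ind {w : Sym2 V → ℝ} {B : ℝ} (h : Bdd w B) (u : V) :
    ∑ e with u ∈ e, ex w (ind e) = 1 - pf (delV w u) / pf w := by
  simp only [ex_ind]
  rw [← sum_div, eq_sub_iff_add_eq, ← add_div, add_comm, ← pf_expand]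
  exact div_self (pf_pos h.1).ne'

lemma ex_ind_diff {w : Sym2 V → ℝ} {B : ℝ} (h : Bdd w B) (u : V) (f : Sym2 V) :
    ex w (ind f) - ex (delV w u) (ind f) =
      ∑ e with u ∈ e, ex w (ind e) *
        ((if f = e then 1 else 0) + (ex (delE w e) (ind f) - ex (delV w u) (ind f))) := by
  have hp := pf_pos h.1
  have hd := pf_pos (h.delV u).1
  have h1 : ex w (ind f) = pf (delV w u) / pf w * ex (delV w u) (ind f) +
      ∑ e with u ∈ e, ex w (ind e) * ((if f = e then 1 else 0) + ex (delE w e) (ind f)) := by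
    conv_lhs => rw [ex, expand w u, add_div, Finset.sum_div (univ.filter fun e => u ∈ e)]
    congr 1
    · rw [ex, div_mul_div_comm, mul_comm (pf w), mul_div_mul_left _ _ hd.ne']
    · refine sum_congr rfl fun e _ => ?_
      have he := pf_pos (h.delE e).1
      rw [← ex_ind_insert h.1, ex_ind, ex]
      field_simp
  have h2 := sum_ex_ind h u
  have h3 : ∑ e with u ∈ e, ex w (ind e) *
        ((if f = e then 1 else 0) + (ex (delE w e) (ind f) - ex (delV w u) (ind f))) =
      ∑ e with u ∈ e, ex w (ind e) * ((if f = e then 1 else 0) + ex (delE w e) (ind f)) -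
        (∑ e with u ∈ e, ex w (ind e)) * ex (delV w u) (ind f) := by
    rw [sum_mul, ← sum_sub_distrib]
    exact sum_congr rfl fun e _ => by ring
  rw [h3, h2]
  conv_lhs => rw [h1]
  ring

/-- Total influence of a vertex. Deleting `u` changes the edge marginals only when `u` is matched,
say to `v`, and then the discrepancy consists of the edge `uv` plus the effect of deleting `v` from
the graph without `u`. As `u` is matched with probability at most `B / (1 + B)`, the total
discrepancy is at most `B`. -/
lemma influence {w : Sym2 V → ℝ} {B : ℝ} (h : Bdd w B) (u : V) :
    ∑ f, |ex w (ind f) - ex (delV w u) (ind f)| ≤ B := by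
  have main : ∀ k : ℕ, ∀ (w : Sym2 V → ℝ), (univ.filter fun e => w e ≠ 0).card ≤ k →
      Bdd w B → ∀ u : V, ∑ f, |ex w (ind f) - ex (delV w u) (ind f)| ≤ B := by
    intro k
    induction k with
    | zero =>
      intro w hk h u
      have h0 : delV w u = w := by
        funext e
        have : w e = 0 := by
          by_contra hne
          have : e ∈ (univ.filter fun e => w e ≠ 0) := by simp [hne]
          rw [card_eq_zero.1 (Nat.le_zero.1 hk)] at this
          simp at this
        simp [delV, this]
      rw [h0]
      simpa using h.nonneg u
    | succ k ih =>
      intro w hk h u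
      have hB := h.nonneg u
      by_cases h0 : delV w u = w
      · rw [h0]; simpa using hB
      have hk' : (univ.filter fun e => delV w u e ≠ 0).card ≤ k := by
        have : (univ.filter fun e => delV w u e ≠ 0) ⊂ (univ.filter fun e => w e ≠ 0) := by
          rw [ssubset_iff_of_subset]
          · obtain ⟨e, he⟩ := Function.ne_iff.1 h0
            have hue : u ∈ e := by
              by_contra hue
              exact he (by simp [delV, hue])
            refine ⟨e, ?_, ?_⟩
            · simp only [mem_filter, mem_univ, true_and]
              intro hw
              exact he (by simp [delV, hue, hw])
            · simp [delV, hue]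
          · intro e he
            simp only [mem_filter, mem_univ, true_and] at he ⊢
            intro hw
            exact he (by simp [delV, hw])
        have := card_lt_card this
        omega
      have hpn : ∀ e, 0 ≤ ex w (ind e) := fun e => ex_nonneg h.1 (ind_nonneg e)
      calc ∑ f, |ex w (ind f) - ex (delV w u) (ind f)|
          ≤ ∑ f, ∑ e with u ∈ e, ex w (ind e) *
              ((if f = e then 1 else 0) + |ex (delV w u) (ind f) - ex (delE w e) (ind f)|) := by
            refine sum_le_sum fun f _ => ?_
            rw [ex_ind_diff h]
            refine (abs_sum_le_sum_abs _ _).trans (sum_le_sum fun e _ => ?_)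
            rw [abs_mul, abs_of_nonneg (hpn e)]
            refine mul_le_mul_of_nonneg_left ((abs_add_le _ _).trans ?_) (hpn e)
            rw [abs_sub_comm (ex (delE w e) (ind f))]
            refine add_le_add ?_ le_rfl
            split_ifs <;> simp
        _ = ∑ e with u ∈ e, ex w (ind e) *
              (1 + ∑ f, |ex (delV w u) (ind f) - ex (delE w e) (ind f)|) := by
            rw [sum_comm]
            refine sum_congr rfl fun e _ => ?_
            rw [← mul_sum, sum_add_distrib]
            simp
        _ ≤ ∑ e with u ∈ e, ex w (ind e) * (1 + B) := by
            refine sum_le_sum fun e he => mul_le_mul_of_nonneg_left ?_ (hpn e)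
            have hue : u ∈ e := by simpa using he
            obtain ⟨v, rfl⟩ := Sym2.mem_iff_exists.1 hue
            rw [delE_mk]
            exact add_le_add le_rfl (ih (delV w u) hk' (h.delV u) v)
        _ = (1 - pf (delV w u) / pf w) * (1 + B) := by rw [← sum_mul, sum_ex_ind h]
        _ ≤ B := by
            have hp := pf_pos h.1
            have h1 := pf_le_delV h u
            have h2 : 1 ≤ pf (delV w u) / pf w * (1 + B) := by
              rw [div_mul_eq_mul_div, le_div_iff₀ hp]; linarith
            linarith
  exact main _ w le_rfl h u

lemma ex_ind_le_one {w : Sym2 V → ℝ} (hw : ∀ e, 0 ≤ w e) (e : Sym2 V) : ex w (ind e) ≤ 1 := by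
  rw [ex, div_le_one (pf_pos hw)]
  refine sum_le_sum fun A _ => ?_
  have h1 : ind e A ≤ 1 := by unfold ind; split_ifs <;> norm_num
  exact mul_le_of_le_one_right (wt_nonneg hw A) h1

/-- Row sums of the covariance matrix of the edge indicators. -/
lemma cov_row {w : Sym2 V → ℝ} {B : ℝ} (h : Bdd w B) (e : Sym2 V) :
    ∑ f, |ex w (fun A => ind e A * ind f A) - ex w (ind e) * ex w (ind f)| ≤ 1 + 2 * B := by
  have hp := ex_nonneg h.1 (ind_nonneg e)
  have h1 : ∀ f, ex w (fun A => ind e A * ind f A) - ex w (ind e) * ex w (ind f) =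
      ex w (ind e) * ((if f = e then 1 else 0) + (ex (delE w e) (ind f) - ex w (ind f))) := by
    intro f
    rw [ex_ind_mul h.1, ex_ind_insert h.1]; ring
  have h2 : ∑ f, |ex (delE w e) (ind f) - ex w (ind f)| ≤ 2 * B := by
    induction e with | _ u v =>
    rw [delE_mk]
    have a1 := influence h u
    have a2 := influence (h.delV u) v
    calc ∑ f, |ex (delV (delV w u) v) (ind f) - ex w (ind f)| ≤
        ∑ f, (|ex w (ind f) - ex (delV w u) (ind f)| +
          |ex (delV w u) (ind f) - ex (delV (delV w u) v) (ind f)|) := by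
          refine sum_le_sum fun f _ => ?_
          rw [abs_sub_comm]
          exact abs_sub_le _ _ _
      _ ≤ 2 * B := by rw [sum_add_distrib]; linarith
  calc ∑ f, |ex w (fun A => ind e A * ind f A) - ex w (ind e) * ex w (ind f)|
      ≤ ∑ f, ((if f = e then 1 else 0) + |ex (delE w e) (ind f) - ex w (ind f)|) := by
        refine sum_le_sum fun f _ => ?_
        rw [h1, abs_mul, abs_of_nonneg hp]
        refine (mul_le_of_le_one_left (abs_nonneg _) (ex_ind_le_one h.1 e)).trans ?_
        refine (abs_add_le _ _).trans (add_le_add ?_ le_rfl)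
        split_ifs <;> simp
    _ = 1 + ∑ f, |ex (delE w e) (ind f) - ex w (ind f)| := by rw [sum_add_distrib]; simp
    _ ≤ _ := by linarith

/-- Spectral independence: the variance of a linear statistic of the matching is at most
`(1 + 2 B) ‖a‖²`. -/
lemma var_le {w : Sym2 V → ℝ} {B : ℝ} (h : Bdd w B) (a : Sym2 V → ℝ) :
    ex w (fun A => (∑ e, a e * ind e A) ^ 2) - (ex w (fun A => ∑ e, a e * ind e A)) ^ 2 ≤
      (1 + 2 * B) * ∑ e, a e ^ 2 := by
  set c : Sym2 V → Sym2 V → ℝ :=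
    fun e f => ex w (fun A => ind e A * ind f A) - ex w (ind e) * ex w (ind f) with hc
  have hsymm : ∀ e f, c e f = c f e := by
    intro e f
    simp only [hc]
    rw [mul_comm (ex w (ind e))]
    congr 2
    funext A; ring
  have h1 : ex w (fun A => (∑ e, a e * ind e A) ^ 2) -
      (ex w (fun A => ∑ e, a e * ind e A)) ^ 2 = ∑ e, ∑ f, a e * a f * c e f := by
    have e1 : (fun A : Finset (Sym2 V) => (∑ e, a e * ind e A) ^ 2) =
        fun A => ∑ e, ∑ f, a e * a f * (ind e A * ind f A) := by
      funext A
      rw [sq, sum_mul_sum]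
      exact sum_congr rfl fun e _ => sum_congr rfl fun f _ => by ring
    have e2 : (ex w (fun A => ∑ e, a e * ind e A)) ^ 2 =
        ∑ e, ∑ f, a e * a f * (ex w (ind e) * ex w (ind f)) := by
      rw [ex_sum, sq, sum_mul_sum]
      refine sum_congr rfl fun e _ => sum_congr rfl fun f _ => ?_
      rw [ex_mul, ex_mul]; ring
    rw [e1, e2, ex_sum, ← sum_sub_distrib]
    refine sum_congr rfl fun e _ => ?_
    rw [ex_sum, ← sum_sub_distrib]
    refine sum_congr rfl fun f _ => ?_
    rw [ex_mul, hc]; ring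
  rw [h1]
  calc ∑ e, ∑ f, a e * a f * c e f ≤ ∑ e, ∑ f, (a e ^ 2 / 2 * |c e f| + a f ^ 2 / 2 * |c f e|) := by
        refine sum_le_sum fun e _ => sum_le_sum fun f _ => ?_
        rw [hsymm f e, ← add_mul]
        have h2 : a e * a f * c e f ≤ |a e * a f| * |c e f| := by
          rw [← abs_mul]; exact le_abs_self _
        have h3 : |a e * a f| ≤ a e ^ 2 / 2 + a f ^ 2 / 2 := by
          rw [abs_mul, ← sq_abs (a e), ← sq_abs (a f)]
          nlinarith [sq_nonneg (|a e| - |a f|)]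
        exact h2.trans (mul_le_mul_of_nonneg_right h3 (abs_nonneg _))
    _ = ∑ e, a e ^ 2 * ∑ f, |c e f| := by
        simp only [sum_add_distrib]
        rw [sum_comm (f := fun e f => a f ^ 2 / 2 * |c f e|), ← sum_add_distrib]
        refine sum_congr rfl fun e _ => ?_
        rw [← sum_add_distrib, mul_sum]
        exact sum_congr rfl fun f _ => by ring
    _ ≤ ∑ e, a e ^ 2 * (1 + 2 * B) :=
        sum_le_sum fun e _ => mul_le_mul_of_nonneg_left (cov_row h e) (sq_nonneg _)
    _ = _ := by rw [← sum_mul, mul_comm]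

end matchings

/-! ### A Laplace transform bound and the entropy form of spectral independence -/

/-- If the variance of `c` under every tilt `m · exp (t c)`, `0 ≤ t ≤ 1`, is at most `v`, then the
logarithmic Laplace transform of `c` at `1` is at most its mean plus `v / 2`. -/
lemma log_laplace {ι : Type*} (s : Finset ι) (m c : ι → ℝ) (v : ℝ)
    (hpos : ∀ t, 0 < ∑ i ∈ s, m i * Real.exp (t * c i))
    (hv : ∀ t ∈ Set.Icc (0 : ℝ) 1,
      (∑ i ∈ s, m i * Real.exp (t * c i) * c i ^ 2) * (∑ i ∈ s, m i * Real.exp (t * c i)) -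
        (∑ i ∈ s, m i * Real.exp (t * c i) * c i) ^ 2 ≤
        v * (∑ i ∈ s, m i * Real.exp (t * c i)) ^ 2) :
    Real.log (∑ i ∈ s, m i * Real.exp (c i)) ≤
      Real.log (∑ i ∈ s, m i) + (∑ i ∈ s, m i * c i) / (∑ i ∈ s, m i) + v / 2 := by
  set M0 : ℝ → ℝ := fun t => ∑ i ∈ s, m i * Real.exp (t * c i) with hM0
  set M1 : ℝ → ℝ := fun t => ∑ i ∈ s, m i * Real.exp (t * c i) * c i with hM1
  set M2 : ℝ → ℝ := fun t => ∑ i ∈ s, m i * Real.exp (t * c i) * c i ^ 2 with hM2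
  have he : ∀ (i : ι) (t : ℝ), HasDerivAt (fun t => Real.exp (t * c i))
      (Real.exp (t * c i) * c i) t := fun i t => by
    simpa using ((hasDerivAt_id t).mul_const (c i)).exp
  have d0 : ∀ t, HasDerivAt M0 (M1 t) t := fun t => by
    refine (HasDerivAt.fun_sum fun i _ => (he i t).const_mul (m i)).congr_deriv ?_
    exact sum_congr rfl fun i _ => by ring
  have d1 : ∀ t, HasDerivAt M1 (M2 t) t := fun t => by
    refine (HasDerivAt.fun_sum fun i _ => ((he i t).const_mul (m i)).mul_const (c i)).congr_deriv ?_
    exact sum_congr rfl fun i _ => by ring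
  have dh : ∀ t, HasDerivAt (fun t => M1 t / M0 t - v * t)
      ((M2 t * M0 t - M1 t * M1 t) / M0 t ^ 2 - v) t := fun t => by
    refine (((d1 t).div (d0 t) (hpos t).ne').sub ((hasDerivAt_id t).const_mul v)).congr_deriv ?_
    simp
  have hh : AntitoneOn (fun t => M1 t / M0 t - v * t) (Set.Icc 0 1) := by
    refine antitoneOn_of_deriv_nonpos (convex_Icc 0 1)
      (fun t _ => (dh t).continuousAt.continuousWithinAt)
      (fun t _ => (dh t).differentiableAt.differentiableWithinAt) fun t ht => ?_
    rw [(dh t).deriv, sub_nonpos, div_le_iff₀ (pow_pos (hpos t) 2)]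
    have := hv t (interior_subset ht)
    rw [sq (∑ i ∈ s, m i * Real.exp (t * c i) * c i)] at this
    exact this
  have dg : ∀ t, HasDerivAt (fun t => Real.log (M0 t) - t * (M1 0 / M0 0) - v / 2 * t ^ 2)
      (M1 t / M0 t - M1 0 / M0 0 - v * t) t := fun t => by
    refine ((((d0 t).log (hpos t).ne').sub ((hasDerivAt_id t).mul_const _)).sub
      (((hasDerivAt_id t).pow 2).const_mul (v / 2))).congr_deriv ?_
    simp
    ring
  have hg : AntitoneOn (fun t => Real.log (M0 t) - t * (M1 0 / M0 0) - v / 2 * t ^ 2)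
      (Set.Icc 0 1) := by
    refine antitoneOn_of_deriv_nonpos (convex_Icc 0 1)
      (fun t _ => (dg t).continuousAt.continuousWithinAt)
      (fun t _ => (dg t).differentiableAt.differentiableWithinAt) fun t ht => ?_
    rw [(dg t).deriv]
    have ht' := interior_subset ht
    have := hh (Set.left_mem_Icc.2 zero_le_one) ht' ht'.1
    simp only [mul_zero, sub_zero] at this
    linarith
  have := hg (Set.left_mem_Icc.2 zero_le_one) (Set.right_mem_Icc.2 zero_le_one) zero_le_one
  have e0 : M0 0 = ∑ i ∈ s, m i := by simp [hM0]
  have e1 : M1 0 = ∑ i ∈ s, m i * c i := by simp [hM1]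
  have e2 : M0 1 = ∑ i ∈ s, m i * Real.exp (c i) := by simp [hM0]
  simp only [e0, e1, e2] at this
  norm_num at this
  linarith

section matchings
variable {V : Type} [Fintype V] [DecidableEq V]

lemma wt_tilt (w a : Sym2 V → ℝ) (t : ℝ) (A : Finset (Sym2 V)) :
    wt w A * Real.exp (t * ∑ e, a e * ind e A) = wt (fun e => w e * Real.exp (t * a e)) A := by
  have : ∑ e, a e * ind e A = ∑ e ∈ A, a e := by
    simp [ind]
  rw [this, mul_sum, Real.exp_sum]
  unfold wt
  split_ifs
  · rw [prod_mul_distrib]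
  · rw [zero_mul]

/-- Logarithmic Laplace transform of a linear statistic with coefficients in `[-1, 1]`. The tilted
measures are monomer-dimer measures again, with fugacities multiplied by at most `exp 1 ≤ 3`. -/
lemma log_laplace_wt {w : Sym2 V → ℝ} {B : ℝ} (h : Bdd w B) (a : Sym2 V → ℝ)
    (ha : ∀ e, |a e| ≤ 1) :
    Real.log (∑ A, wt w A * Real.exp (∑ e, a e * ind e A)) ≤
      Real.log (pf w) + ∑ e, a e * ex w (ind e) + (1 + 2 * (3 * B)) * (∑ e, a e ^ 2) / 2 := by
  have hb : ∀ t ∈ Set.Icc (0 : ℝ) 1, Bdd (fun e => w e * Real.exp (t * a e)) (3 * B) := by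
    intro t ht
    refine ⟨fun e => mul_nonneg (h.1 e) (Real.exp_pos _).le, fun u => ?_⟩
    calc ∑ e with u ∈ e, w e * Real.exp (t * a e) ≤ ∑ e with u ∈ e, w e * 3 := by
          refine sum_le_sum fun e _ => mul_le_mul_of_nonneg_left ?_ (h.1 e)
          have h1 : t * a e ≤ 1 := by
            have := (abs_le.1 (ha e)).2
            nlinarith [ht.1, ht.2]
          exact (Real.exp_le_exp.2 h1).trans (by linarith [Real.exp_one_lt_d9])
      _ = 3 * ∑ e with u ∈ e, w e := by rw [← sum_mul, mul_comm]
      _ ≤ 3 * B := by linarith [h.2 u]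
  have hn : ∀ t e, 0 ≤ w e * Real.exp (t * a e) :=
    fun t e => mul_nonneg (h.1 e) (Real.exp_pos _).le
  have key := log_laplace univ (wt w) (fun A => ∑ e, a e * ind e A)
    ((1 + 2 * (3 * B)) * (∑ e, a e ^ 2)) ?_ ?_
  · have e1 : (∑ A, wt w A * ∑ e, a e * ind e A) / ∑ A, wt w A = ∑ e, a e * ex w (ind e) := by
      have : ex w (fun A => ∑ e, a e * ind e A) = ∑ e, a e * ex w (ind e) := by
        rw [ex_sum]
        exact sum_congr rfl fun e _ => ex_mul _ _ _
      exact this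
    rw [e1] at key
    exact key
  · intro t
    simp only [wt_tilt]
    exact pf_pos (hn t)
  · intro t ht
    simp only [wt_tilt]
    have hp := pf_pos (hn t)
    have hv := var_le (hb t ht) a
    unfold ex at hv
    change _ * pf _ - _ ≤ _ * pf _ ^ 2
    set W : Sym2 V → ℝ := fun e => w e * Real.exp (t * a e)
    have : ∀ X Y : ℝ, X * pf W - Y ^ 2 = (X / pf W - (Y / pf W) ^ 2) * pf W ^ 2 := by
      intro X Y; field_simp
    rw [this]
    exact mul_le_mul_of_nonneg_right hv (sq_nonneg _)

/-- Conditioning a random matching on the status of one edge: summed over all edges, the entropy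
explained by a single edge is at most a constant times the total relative entropy. -/
lemma single_edge_entropy {w : Sym2 V → ℝ} {B lam c : ℝ} (h : Bdd w B) (hB : 0 ≤ B) (hl : 0 < lam)
    (hw : ∀ e, w e = 0 ∨ w e = lam) (hc : 0 < c) (n : Finset (Sym2 V) → ℝ) (hn : ∀ A, 0 ≤ n A)
    (hn0 : ∀ A, wt w A = 0 → n A = 0) :
    ∑ e, ent (∑ A, ind e A * n A) (∑ A, ind e A * (c * wt w A))
        (∑ A, n A - ∑ A, ind e A * n A) (∑ A, c * wt w A - ∑ A, ind e A * (c * wt w A)) ≤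
      2 * (1 + 6 * B) * (1 + B) ^ 3 / lam *
        (∑ A, kl (n A) (c * wt w A) - kl (∑ A, n A) (∑ A, c * wt w A)) := by
  have hW := fun A => wt_nonneg h.1 A
  have hp := pf_pos h.1
  have hm : ∑ A, c * wt w A = c * pf w := by rw [← mul_sum]; rfl
  have hcW : ∀ e, ∑ A, ind e A * (c * wt w A) = c * pf w * ex w (ind e) := by
    intro e
    rw [ex, mul_assoc, mul_div_cancel₀ _ hp.ne', mul_sum]
    exact sum_congr rfl fun A _ => by ring
  have hw0 : ∀ e, w e = 0 → ∀ A, ind e A * wt w A = 0 := fun e he A => by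
    unfold ind; split_ifs with hA
    · rw [wt_eq_zero hA he, mul_zero]
    · rw [zero_mul]
  set N := ∑ A, n A with hN
  have hN0 : 0 ≤ N := sum_nonneg fun A _ => hn A
  rcases hN0.eq_or_lt with hz | hNp
  · have hn1 : ∀ A, n A = 0 := fun A =>
      (sum_eq_zero_iff_of_nonneg fun A _ => hn A).1 (hN ▸ hz.symm) A (mem_univ A)
    rw [← hz]
    simp [hn1, ent]
  set p : Sym2 V → ℝ := fun e => ex w (ind e) with hpdef
  set q : Sym2 V → ℝ := fun e => (∑ A, ind e A * n A) / N with hqdef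
  have hq : ∀ e, ∑ A, ind e A * n A = N * q e := fun e => by
    simp only [hqdef]; field_simp
  have hi1 : ∀ e (A : Finset (Sym2 V)), ind e A ≤ 1 := fun e A => by
    unfold ind; split_ifs <;> norm_num
  have hq0 : ∀ e, 0 ≤ q e := fun e =>
    div_nonneg (sum_nonneg fun A _ => mul_nonneg (ind_nonneg e A) (hn A)) hN0
  have hq1 : ∀ e, q e ≤ 1 := fun e => by
    simp only [hqdef]
    rw [div_le_one hNp]
    exact sum_le_sum fun A _ => mul_le_of_le_one_left (hn A) (hi1 e A)
  have hp0 : ∀ e, 0 ≤ p e := fun e => ex_nonneg h.1 (ind_nonneg e)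
  have hp1 : ∀ e, p e ≤ 1 := fun e => ex_ind_le_one h.1 e
  set D := ∑ e, (q e - p e) ^ 2 with hD
  have hD0 : 0 ≤ D := sum_nonneg fun e _ => sq_nonneg _
  have left : ∑ e, ent (∑ A, ind e A * n A) (∑ A, ind e A * (c * wt w A))
        (N - ∑ A, ind e A * n A) (∑ A, c * wt w A - ∑ A, ind e A * (c * wt w A)) ≤
      N * ((1 + B) ^ 3 / lam) * D := by
    rw [hD, mul_sum]
    refine sum_le_sum fun e _ => ?_
    rcases hw e with he | he
    · have z1 : ∑ A, ind e A * n A = 0 := sum_eq_zero fun A _ => by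
        unfold ind; split_ifs with hA
        · rw [hn0 A (wt_eq_zero hA he), mul_zero]
        · rw [zero_mul]
      have z2 : ∑ A, ind e A * (c * wt w A) = 0 := sum_eq_zero fun A _ => by
        rw [mul_left_comm, hw0 e he, mul_zero]
      rw [z1, z2, ent_zero_left]
      positivity
    · have hlow : lam ≤ (1 + B) ^ 2 * p e := by
        have h1 := pf_le_delE h e
        simp only [hpdef, ex_ind, he]
        rw [mul_div_assoc', le_div_iff₀ hp]
        nlinarith
      have hup : 1 ≤ (1 + B) * (1 - p e) := by
        induction e with | _ u v =>
        have h1 := pf_le_delV h u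
        have h2 : p s(u, v) ≤ 1 - pf (delV w u) / pf w := by
          rw [← sum_ex_ind h u]
          exact single_le_sum (f := fun e => ex w (ind e))
            (fun e _ => ex_nonneg h.1 (ind_nonneg e)) (by simp)
        have h3 : 1 ≤ (1 + B) * (pf (delV w u) / pf w) := by
          rw [mul_div_assoc', le_div_iff₀ hp]; linarith
        have h4 : (1 + B) * (pf (delV w u) / pf w) ≤ (1 + B) * (1 - p s(u, v)) :=
          mul_le_mul_of_nonneg_left (by linarith) (by linarith)
        linarith
      have hpp : 0 < p e := by
        by_contra hneg
        have : p e = 0 := le_antisymm (not_lt.1 hneg) (hp0 e)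
        rw [this, mul_zero] at hlow
        linarith
      have hpq : 0 < 1 - p e := by
        by_contra hneg
        have : (1 + B) * (1 - p e) ≤ 0 :=
          mul_nonpos_of_nonneg_of_nonpos (by linarith) (not_lt.1 hneg)
        linarith
      rw [hcW e, hm, hq e]
      change ent (N * q e) (c * pf w * p e) (N - N * q e) (c * pf w - c * pf w * p e) ≤ _
      have hcp : 0 < c * pf w := mul_pos hc hp
      have e1 : c * pf w - c * pf w * p e = c * pf w * (1 - p e) := by ring
      have e2 : N - N * q e = N * (1 - q e) := by ring
      rw [e1, e2]
      refine (ent_le_chi (mul_nonneg hN0 (hq0 e)) (mul_pos hcp hpp)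
        (mul_nonneg hN0 (by linarith [hq1 e])) (mul_pos hcp hpq) (by nlinarith)).trans ?_
      have e3 : (N * q e * (c * pf w * (1 - p e)) - N * (1 - q e) * (c * pf w * p e)) ^ 2 /
          (c * pf w * p e * (c * pf w * (1 - p e)) * (N * q e + N * (1 - q e))) =
          N * (1 / (p e * (1 - p e))) * (q e - p e) ^ 2 := by
        have : N * q e + N * (1 - q e) = N := by ring
        rw [this]
        field_simp
        ring
      rw [e3]
      refine mul_le_mul_of_nonneg_right (mul_le_mul_of_nonneg_left ?_ hN0) (sq_nonneg _)
      rw [div_le_div_iff₀ (mul_pos hpp hpq) hl, one_mul]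
      calc lam = lam * 1 := (mul_one _).symm
        _ ≤ ((1 + B) ^ 2 * p e) * ((1 + B) * (1 - p e)) :=
            mul_le_mul hlow hup zero_le_one (by positivity)
        _ = _ := by ring
  -- The test function: the linear statistic with coefficients `(q e - p e) / K`.
  set K := 1 + 2 * (3 * B) with hK
  have hK1 : 1 ≤ K := by rw [hK]; linarith
  have hKp : 0 < K := by linarith
  set a : Sym2 V → ℝ := fun e => (q e - p e) / K with hadef
  have ha : ∀ e, |a e| ≤ 1 := fun e => by
    simp only [hadef]
    rw [abs_div, abs_of_pos hKp, div_le_one hKp]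
    refine le_trans ?_ hK1
    rw [abs_le]
    constructor <;> linarith [hq0 e, hq1 e, hp0 e, hp1 e]
  set C : Finset (Sym2 V) → ℝ := fun A => ∑ e, a e * ind e A with hC
  have lap := log_laplace_wt h a ha
  have hL0 : 0 < ∑ A, wt w A * Real.exp (C A) := by
    have : ∀ A, wt w A * Real.exp (C A) = wt (fun e => w e * Real.exp (1 * a e)) A := fun A => by
      rw [← wt_tilt, one_mul]
    simp only [this]
    exact pf_pos fun e => mul_nonneg (h.1 e) (Real.exp_pos _).le
  have right : N / (2 * K) * D ≤ ∑ A, kl (n A) (c * wt w A) - kl N (c * pf w) := by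
    have h1 := log_sum univ n (fun A => c * wt w A * Real.exp (C A)) (fun A _ => hn A)
      (fun A _ => mul_nonneg (mul_nonneg hc.le (hW A)) (Real.exp_pos _).le) (fun A _ hA => by
        refine hn0 A ?_
        have := (Real.exp_pos (C A)).ne'
        simpa [hc.ne', this] using hA)
    have h2 : ∀ A, kl (n A) (c * wt w A * Real.exp (C A)) =
        kl (n A) (c * wt w A) - n A * C A := by
      intro A
      rw [kl_def, kl_def]
      by_cases hA : wt w A = 0
      · rw [hn0 A hA]; simp
      by_cases hnA : n A = 0
      · rw [hnA]; simp
      have hcw : c * wt w A ≠ 0 := mul_ne_zero hc.ne' hA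
      rw [← div_div, Real.log_div (div_ne_zero hnA hcw) (Real.exp_pos _).ne', Real.log_exp]
      ring
    have h3 : ∑ A, n A * C A = N * ∑ e, a e * q e := by
      simp only [hC, mul_sum]
      rw [sum_comm]
      refine sum_congr rfl fun e _ => ?_
      have : N * (a e * q e) = a e * ∑ A, ind e A * n A := by rw [hq]; ring
      rw [this, mul_sum]
      exact sum_congr rfl fun A _ => by ring
    simp only [h2, sum_sub_distrib, h3] at h1
    have h4 : ∑ A, c * wt w A * Real.exp (C A) = c * ∑ A, wt w A * Real.exp (C A) := by
      rw [mul_sum]; exact sum_congr rfl fun A _ => by ring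
    rw [h4, ← hN, kl_def, Real.log_div hNp.ne' (mul_pos hc hL0).ne',
      Real.log_mul hc.ne' hL0.ne'] at h1
    rw [kl_def, Real.log_div hNp.ne' (mul_pos hc hp).ne', Real.log_mul hc.ne' hp.ne']
    have h5 : ∑ e, a e * q e - ∑ e, a e * p e = D / K := by
      rw [← sum_sub_distrib, hD, sum_div]
      exact sum_congr rfl fun e _ => by simp only [hadef]; ring
    have h6 : ∑ e, a e ^ 2 = D / K ^ 2 := by
      rw [hD, sum_div]
      exact sum_congr rfl fun e _ => by simp only [hadef]; ring_nf
    rw [h6] at lap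
    have h7 : K * (D / K ^ 2) / 2 = D / (2 * K) := by field_simp
    rw [h7] at lap
    have h8 : N / (2 * K) * D = N * (D / K - D / (2 * K)) := by field_simp; ring
    have h9 := mul_le_mul_of_nonneg_left lap hN0
    change N * Real.log (∑ A, wt w A * Real.exp (C A)) ≤
      N * (Real.log (pf w) + ∑ e, a e * p e + D / (2 * K)) at h9
    rw [h8, ← h5]
    nlinarith
  rw [hm] at left ⊢
  refine left.trans ?_
  have e1 : N * ((1 + B) ^ 3 / lam) * D =
      2 * (1 + 6 * B) * (1 + B) ^ 3 / lam * (N / (2 * K) * D) := by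
    have : K = 1 + 6 * B := by rw [hK]; ring
    rw [← this]; field_simp
  rw [e1]
  exact mul_le_mul_of_nonneg_left right (by positivity)

end matchings

/-! ### Relative entropy after erasing a set of coordinates -/

section marginals
variable {α : Type*} [Fintype α] [DecidableEq α]

/-- The marginal of `g`, a density on subsets of `α`, on the coordinates outside `S`, evaluated at
`τ ⊆ Sᶜ`. -/
noncomputable def marg (S : Finset α) (g : Finset α → ℝ) (τ : Finset α) : ℝ :=
  ∑ A ∈ S.powerset, g (τ ∪ A)

/-- Relative entropy between the marginals of `ν` and `μ` on the coordinates outside `S`. -/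
noncomputable def outEnt (ν μ : Finset α → ℝ) (S : Finset α) : ℝ :=
  ∑ τ ∈ Sᶜ.powerset, kl (marg S ν τ) (marg S μ τ)

/-- Average relative entropy of the coordinates in `S` conditioned on those outside `S`. -/
noncomputable def inEnt (ν μ : Finset α → ℝ) (S : Finset α) : ℝ := outEnt ν μ ∅ - outEnt ν μ S

lemma marg_empty (g : Finset α → ℝ) (τ : Finset α) : marg ∅ g τ = g τ := by simp [marg]

lemma marg_nonneg {g : Finset α → ℝ} (hg : ∀ x, 0 ≤ g x) (S τ : Finset α) : 0 ≤ marg S g τ :=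
  sum_nonneg fun _ _ => hg _

lemma marg_zero {ν μ : Finset α → ℝ} (hμ : ∀ x, 0 ≤ μ x) (h : ∀ x, μ x = 0 → ν x = 0)
    (S τ : Finset α) (h0 : marg S μ τ = 0) : marg S ν τ = 0 :=
  sum_eq_zero fun A hA => h _ ((sum_eq_zero_iff_of_nonneg fun _ _ => hμ _).1 h0 A hA)

lemma marg_insert {e : α} {S : Finset α} (he : e ∉ S) (g : Finset α → ℝ) (τ : Finset α) :
    marg (insert e S) g τ = marg S g (insert e τ) + marg S g τ := by
  unfold marg
  rw [sum_powerset_insert he, add_comm]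
  congr 1
  exact sum_congr rfl fun A _ => by rw [union_insert, insert_union]

lemma marg_union {R Q : Finset α} (h : Disjoint R Q) (g : Finset α → ℝ) (τ : Finset α) :
    marg (R ∪ Q) g τ = ∑ A ∈ R.powerset, marg Q g (τ ∪ A) := by
  unfold marg
  rw [sum_powerset_union _ _ h]
  simp only [union_assoc]

lemma outEnt_sub {e : α} {S : Finset α} (he : e ∉ S) (ν μ : Finset α → ℝ) :
    outEnt ν μ S - outEnt ν μ (insert e S) =
      ∑ τ ∈ (insert e S)ᶜ.powerset, ent (marg S ν (insert e τ)) (marg S μ (insert e τ))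
        (marg S ν τ) (marg S μ τ) := by
  have h1 : Sᶜ = insert e (insert e S)ᶜ := by
    ext x; by_cases hx : x = e <;> simp [hx, he]
  unfold outEnt
  rw [h1, sum_powerset_insert (by simp), ← sum_add_distrib, ← sum_sub_distrib]
  refine sum_congr rfl fun τ _ => ?_
  rw [marg_insert he, marg_insert he, ent]
  ring

lemma outEnt_empty (ν μ : Finset α → ℝ) (S : Finset α) :
    outEnt ν μ ∅ = ∑ τ ∈ Sᶜ.powerset, ∑ A ∈ S.powerset, kl (ν (τ ∪ A)) (μ (τ ∪ A)) := by
  have h : (∅ : Finset α)ᶜ = Sᶜ ∪ S := by ext x; simp [em']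
  unfold outEnt
  simp only [marg_empty]
  rw [h, sum_powerset_union _ _ disjoint_compl_left]

lemma inEnt_eq (ν μ : Finset α → ℝ) (S : Finset α) :
    inEnt ν μ S = ∑ τ ∈ Sᶜ.powerset,
      (∑ A ∈ S.powerset, kl (ν (τ ∪ A)) (μ (τ ∪ A)) - kl (marg S ν τ) (marg S μ τ)) := by
  rw [inEnt, outEnt_empty ν μ S, sum_sub_distrib]
  rfl

lemma inEnt_empty (ν μ : Finset α → ℝ) : inEnt ν μ ∅ = 0 := sub_self _

lemma inEnt_nonneg {ν μ : Finset α → ℝ} (hν : ∀ x, 0 ≤ ν x) (hμ : ∀ x, 0 ≤ μ x)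
    (h : ∀ x, μ x = 0 → ν x = 0) (S : Finset α) : 0 ≤ inEnt ν μ S := by
  rw [inEnt_eq]
  exact sum_nonneg fun τ _ => sub_nonneg.2
    (log_sum _ _ _ (fun _ _ => hν _) (fun _ _ => hμ _) fun _ _ => h _)

lemma inEnt_singleton (ν μ : Finset α → ℝ) (e : α) :
    inEnt ν μ {e} = ∑ τ ∈ ({e} : Finset α)ᶜ.powerset,
      ent (ν (insert e τ)) (μ (insert e τ)) (ν τ) (μ τ) := by
  have := outEnt_sub (notMem_empty e) ν μ
  simp only [marg_empty] at this
  exact this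

end marginals

section matchings
variable {V : Type} [Fintype V] [DecidableEq V]

/-- Constant fugacity `lam` on the edge set `E`. -/
noncomputable def fug (E : Finset (Sym2 V)) (lam : ℝ) : Sym2 V → ℝ :=
  fun e => if e ∈ E then lam else 0

/-- Fugacities `w` restricted to the edges of `S` that touch no edge of `τ`. -/
noncomputable def restr (w : Sym2 V → ℝ) (S τ : Finset (Sym2 V)) : Sym2 V → ℝ :=
  fun e => if e ∈ S ∧ ∀ f ∈ τ, ¬ touch e f then w e else 0

/-- Conditioned on its part `τ` outside `S`, the rest of the matching is again a monomer-dimer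
configuration. -/
lemma wt_union (w : Sym2 V → ℝ) {S τ A : Finset (Sym2 V)} (hτ : Disjoint τ S) (hA : A ⊆ S) :
    wt w (τ ∪ A) = wt w τ * wt (restr w S τ) A := by
  have hd : Disjoint τ A := hτ.mono_right hA
  by_cases h : PD (τ ∪ A)
  · have h1 := h.mono (subset_union_left (s₁ := τ) (s₂ := A))
    have h2 := h.mono (subset_union_right (s₁ := τ) (s₂ := A))
    unfold wt
    rw [if_pos h, if_pos h1, if_pos h2, prod_union hd]
    congr 1
    refine prod_congr rfl fun e he => ?_
    rw [restr, if_pos]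
    refine ⟨hA he, fun f hf ⟨v, hv, hv'⟩ => ?_⟩
    have hne : e ≠ f := fun hef => disjoint_left.1 hd hf (hef ▸ he)
    exact h e (mem_union_right _ he) f (mem_union_left _ hf) hne v hv hv'
  · have e0 : wt w (τ ∪ A) = 0 := by rw [wt, if_neg h]
    rw [e0]
    by_cases h1 : PD τ
    swap
    · rw [wt, if_neg h1, zero_mul]
    by_cases h2 : PD A
    swap
    · rw [wt, wt, if_neg h2, mul_zero]
    have : ∃ e ∈ A, ∃ f ∈ τ, touch e f := by
      by_contra hcon
      push Not at hcon
      refine h fun e he f hf hef v hv hv' => ?_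
      rcases mem_union.1 he with he' | he' <;> rcases mem_union.1 hf with hf' | hf'
      · exact h1 e he' f hf' hef v hv hv'
      · exact hcon f hf' e he' ⟨v, hv', hv⟩
      · exact hcon e he' f hf' ⟨v, hv, hv'⟩
      · exact h2 e he' f hf' hef v hv hv'
    obtain ⟨e, he, f, hf, ht⟩ := this
    rw [wt_eq_zero (w := restr w S τ) he, mul_zero]
    rw [restr, if_neg]
    exact fun hh => hh.2 f hf ht

lemma restr_nonneg {w : Sym2 V → ℝ} (hw : ∀ e, 0 ≤ w e) (S τ : Finset (Sym2 V)) (e : Sym2 V) :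
    0 ≤ restr w S τ e := by
  unfold restr; split_ifs
  · exact hw e
  · exact le_rfl

lemma Bdd.restr {w : Sym2 V → ℝ} {B : ℝ} (h : Bdd w B) (S τ : Finset (Sym2 V)) :
    Bdd (restr w S τ) B := by
  refine ⟨restr_nonneg h.1 S τ, fun u => (sum_le_sum fun e _ => ?_).trans (h.2 u)⟩
  unfold _root_.restr; split_ifs
  · exact le_rfl
  · exact h.1 e

lemma wt_restr_zero (w : Sym2 V → ℝ) {S τ A : Finset (Sym2 V)} (hA : ¬ A ⊆ S) :
    wt (restr w S τ) A = 0 := by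
  obtain ⟨e, he, heS⟩ := not_subset.1 hA
  exact wt_eq_zero he (by rw [restr, if_neg fun h => heS h.1])

lemma fug_nonneg {E : Finset (Sym2 V)} {lam : ℝ} (hl : 0 < lam) (e : Sym2 V) : 0 ≤ fug E lam e := by
  unfold fug; split_ifs
  · exact hl.le
  · exact le_rfl

lemma marg_eq {w : Sym2 V → ℝ} {c : ℝ} {μ : Finset (Sym2 V) → ℝ} (hμ : ∀ x, μ x = c * wt w x)
    {S τ : Finset (Sym2 V)} (hτ : Disjoint τ S) :
    marg S μ τ = μ τ * pf (restr w S τ) := by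
  unfold marg pf
  rw [mul_sum, ← sum_subset (subset_univ S.powerset)]
  · refine sum_congr rfl fun A hA => ?_
    rw [hμ, hμ, wt_union w hτ (mem_powerset.1 hA), mul_assoc]
  · intro A _ hA
    rw [wt_restr_zero w (fun h => hA (mem_powerset.2 h)), mul_zero]

/-- The entropy form of spectral independence: summed over `e ∈ S`, the conditional entropy lost by
removing `e` from `S` is at most a constant multiple of the conditional entropy on `S`. -/
lemma inEnt_erase {E : Finset (Sym2 V)} {B lam c : ℝ} (h : Bdd (fug E lam) B) (hB : 0 ≤ B)
    (hl : 0 < lam) (hc : 0 < c) {ν μ : Finset (Sym2 V) → ℝ} (hμ : ∀ x, μ x = c * wt (fug E lam) x)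
    (hν : ∀ x, 0 ≤ ν x) (h0 : ∀ x, μ x = 0 → ν x = 0) (S : Finset (Sym2 V)) :
    ∑ e ∈ S, (inEnt ν μ S - inEnt ν μ (S.erase e)) ≤
      2 * (1 + 6 * B) * (1 + B) ^ 3 / lam * inEnt ν μ S := by
  have hμn : ∀ x, 0 ≤ μ x := fun x => by
    rw [hμ]; exact mul_nonneg hc.le (wt_nonneg (fug_nonneg hl) x)
  have e1 : ∀ e ∈ S, inEnt ν μ S - inEnt ν μ (S.erase e) = ∑ τ ∈ Sᶜ.powerset,
      ent (marg (S.erase e) ν (insert e τ)) (marg (S.erase e) μ (insert e τ))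
        (marg (S.erase e) ν τ) (marg (S.erase e) μ τ) := by
    intro e he
    have := outEnt_sub (notMem_erase e S) ν μ
    rw [insert_erase he] at this
    rw [← this, inEnt, inEnt]
    ring
  rw [sum_congr rfl e1, sum_comm, inEnt_eq, mul_sum]
  refine sum_le_sum fun τ hτ => ?_
  have hτS : Disjoint τ S := by
    rw [disjoint_left]
    intro x hx
    simpa using mem_powerset.1 hτ hx
  set n : Finset (Sym2 V) → ℝ := fun A => if A ⊆ S then ν (τ ∪ A) else 0 with hn
  set w := restr (fug E lam) S τ with hw
  have gsum : ∀ g : Finset (Sym2 V) → ℝ, ∀ m : Finset (Sym2 V) → ℝ,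
      (∀ A, m A = if A ⊆ S then g (τ ∪ A) else 0) → ∑ A, m A = marg S g τ := by
    intro g m hm
    rw [marg, ← sum_subset (subset_univ S.powerset)]
    · exact sum_congr rfl fun A hA => by rw [hm, if_pos (mem_powerset.1 hA)]
    · intro A _ hA
      rw [hm, if_neg fun hh => hA (mem_powerset.2 hh)]
  have gind : ∀ g : Finset (Sym2 V) → ℝ, ∀ m : Finset (Sym2 V) → ℝ,
      (∀ A, m A = if A ⊆ S then g (τ ∪ A) else 0) → ∀ e ∈ S,
      ∑ A, ind e A * m A = marg (S.erase e) g (insert e τ) := by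
    intro g m hm e he
    rw [← sum_subset (subset_univ S.powerset)]
    · conv_lhs => rw [← insert_erase he]
      rw [sum_powerset_insert (notMem_erase e S), sum_eq_zero, zero_add, marg]
      · refine sum_congr rfl fun A hA => ?_
        have hAS : insert e A ⊆ S := insert_subset he ((mem_powerset.1 hA).trans (erase_subset _ _))
        rw [hm, if_pos hAS, ind, if_pos (mem_insert_self _ _), one_mul, union_insert, insert_union]
      · intro A hA
        have : e ∉ A := fun hh => notMem_erase e S (mem_powerset.1 hA hh)
        rw [ind, if_neg this, zero_mul]
    · intro A _ hA
      rw [hm, if_neg fun hh => hA (mem_powerset.2 hh), mul_zero]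
  by_cases hτ0 : μ τ = 0
  · have hz : ∀ A ⊆ S, μ (τ ∪ A) = 0 := by
      intro A hA
      have : wt (fug E lam) τ = 0 := by
        have := hτ0; rw [hμ] at this; exact (mul_eq_zero.1 this).resolve_left hc.ne'
      rw [hμ, wt_union _ hτS hA, this, zero_mul, mul_zero]
    have hm : marg S μ τ = 0 := sum_eq_zero fun A hA => hz A (mem_powerset.1 hA)
    have hr : 0 ≤ ∑ A ∈ S.powerset, kl (ν (τ ∪ A)) (μ (τ ∪ A)) - kl (marg S ν τ) (marg S μ τ) :=
      sub_nonneg.2 (log_sum _ _ _ (fun _ _ => hν _) (fun _ _ => hμn _) fun _ _ => h0 _)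
    refine le_trans (le_of_eq ?_) (mul_nonneg (by positivity) hr)
    refine sum_eq_zero fun e he => ?_
    have hm2 : marg (S.erase e) μ (insert e τ) + marg (S.erase e) μ τ = 0 := by
      rw [← marg_insert (notMem_erase e S), insert_erase he, hm]
    have hm3 : marg (S.erase e) μ (insert e τ) = 0 :=
      le_antisymm (by linarith [marg_nonneg hμn (S.erase e) τ]) (marg_nonneg hμn _ _)
    rw [hm3, marg_zero hμn h0 _ _ hm3, ent_zero_left]
  · have hτp : 0 < μ τ := lt_of_le_of_ne (hμn τ) (Ne.symm hτ0)
    have hmA : ∀ A, μ τ * wt w A = if A ⊆ S then μ (τ ∪ A) else 0 := by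
      intro A
      split_ifs with hA
      · rw [hμ, hμ, wt_union _ hτS hA, mul_assoc]
      · rw [hw, wt_restr_zero _ hA, mul_zero]
    have hw2 : ∀ e, w e = 0 ∨ w e = lam := by
      intro e
      simp only [hw, restr, fug]
      split_ifs <;> simp
    have key := single_edge_entropy (h.restr S τ) hB hl hw2 hτp n
      (fun A => by simp only [hn]; split_ifs; exacts [hν _, le_rfl])
      (fun A hA => by
        simp only [hn]
        split_ifs with hAS
        · refine h0 _ ?_
          have := hmA A
          rw [if_pos hAS] at this
          rw [← this, hw, hA, mul_zero]
        · rfl)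
    have hnA : ∀ A, n A = if A ⊆ S then ν (τ ∪ A) else 0 := fun A => rfl
    change ∑ e, ent _ (∑ A, ind e A * (μ τ * wt w A)) _ (∑ A, μ τ * wt w A -
      ∑ A, ind e A * (μ τ * wt w A)) ≤ _ * (∑ A, kl (n A) (μ τ * wt w A) -
      kl _ (∑ A, μ τ * wt w A)) at key
    rw [gsum ν n hnA, gsum μ _ hmA] at key
    have hkl : ∑ A, kl (n A) (μ τ * wt w A) =
        ∑ A ∈ S.powerset, kl (ν (τ ∪ A)) (μ (τ ∪ A)) := by
      rw [← sum_subset (subset_univ S.powerset)]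
      · refine sum_congr rfl fun A hA => ?_
        rw [hmA, hnA, if_pos (mem_powerset.1 hA), if_pos (mem_powerset.1 hA)]
      · intro A _ hA
        rw [hnA, if_neg fun hh => hA (mem_powerset.2 hh), kl_def, zero_mul]
    rw [hkl] at key
    refine le_trans (le_of_eq ?_) key
    rw [← sum_subset (subset_univ S)]
    · refine sum_congr rfl fun e he => ?_
      rw [gind ν n hnA e he, gind μ _ hmA e he]
      have a1 := marg_insert (notMem_erase e S) ν τ
      have a2 := marg_insert (notMem_erase e S) μ τ
      rw [insert_erase he] at a1 a2
      rw [a1, a2, add_sub_cancel_left, add_sub_cancel_left]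
    · intro e _ he
      have z : ∀ g : Finset (Sym2 V) → ℝ, ∀ m : Finset (Sym2 V) → ℝ,
          (∀ A, m A = if A ⊆ S then g (τ ∪ A) else 0) → ∑ A, ind e A * m A = 0 := by
        intro g m hm
        refine sum_eq_zero fun A _ => ?_
        rw [hm]
        split_ifs with hA
        · rw [ind, if_neg fun hh => he (hA hh), zero_mul]
        · rw [mul_zero]
      rw [z ν n hnA, z μ _ hmA, ent_zero_left]

end matchings

/-! ### Adding one edge: comparison with the single-edge entropy -/

section matchings
variable {V : Type} [Fintype V] [DecidableEq V]

/-- The edges of `E` other than `e` that share a vertex with `e`. -/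
noncomputable def nbr (E : Finset (Sym2 V)) (e : Sym2 V) : Finset (Sym2 V) :=
  E.filter fun f => f ≠ e ∧ touch e f

lemma wt_fug_insert {E : Finset (Sym2 V)} {lam : ℝ} {e : Sym2 V} {x : Finset (Sym2 V)}
    (heE : e ∈ E) (hex : e ∉ x) (h : ∀ f ∈ x, f ∈ E → ¬ touch e f) :
    wt (fug E lam) (insert e x) = lam * wt (fug E lam) x := by
  rw [wt_insert _ hex, fug, if_pos heE]
  congr 1
  unfold wt
  split_ifs
  · refine prod_congr rfl fun f hf => ?_
    rw [delE]
    split_ifs with ht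
    · rw [fug, if_neg fun hfE => h f hf hfE ht]
    · rfl
  · rfl

lemma wt_fug_insert_zero {E : Finset (Sym2 V)} {lam : ℝ} {e f : Sym2 V} {x : Finset (Sym2 V)}
    (hex : e ∉ x) (hf : f ∈ x) (h : touch e f) :
    wt (fug E lam) (insert e x) = 0 := by
  rw [wt_insert _ hex, wt_eq_zero hf (by rw [delE, if_pos h]), mul_zero]

/-- Resampling `e` together with `S` rather than `S` alone costs at most the entropy of `e` given
everything else plus the entropy that the neighbours of `e` contribute to `S`. Once the neighbours
of `e` are fixed the conditional law of `e` given the rest is explicit, and the event that they are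
all empty has probability bounded below. -/
lemma outEnt_local {E : Finset (Sym2 V)} {B lam c : ℝ} (h : Bdd (fug E lam) B)
    (hl : 0 < lam) (hc : 0 < c) {ν μ : Finset (Sym2 V) → ℝ} (hμ : ∀ x, μ x = c * wt (fug E lam) x)
    (hν : ∀ x, 0 ≤ ν x) (h0 : ∀ x, μ x = 0 → ν x = 0) {S : Finset (Sym2 V)} {e : Sym2 V}
    (heE : e ∈ E) (heS : e ∉ S) :
    outEnt ν μ S - outEnt ν μ (insert e S) ≤ 4 * (lam + (1 + B) ^ 2) * ((1 + lam) / lam) *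
      (inEnt ν μ {e} + (outEnt ν μ (S \ nbr E e) - outEnt ν μ S)) := by
  have hμn : ∀ x, 0 ≤ μ x := fun x => by
    rw [hμ]; exact mul_nonneg hc.le (wt_nonneg (fug_nonneg hl) x)
  set Q := S \ nbr E e with hQ
  set R := S ∩ nbr E e with hR
  have hRQ : Disjoint R Q := (disjoint_sdiff_inter S _).symm
  have hSU : R ∪ Q = S := by rw [union_comm]; exact sdiff_union_inter S _
  have hQS : Q ⊆ S := sdiff_subset
  have heQ : e ∉ Q := fun hh => heS (hQS hh)
  set X : Finset (Sym2 V) → ℝ := fun τ => ∑ A ∈ S.powerset,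
    ent (ν (insert e (τ ∪ A))) (μ (insert e (τ ∪ A))) (ν (τ ∪ A)) (μ (τ ∪ A)) with hX
  set Y : Finset (Sym2 V) → ℝ := fun τ => ∑ A ∈ R.powerset,
    kl (marg Q ν (τ ∪ A)) (marg Q μ (τ ∪ A)) - kl (marg S ν τ) (marg S μ τ) with hY
  have hentn : ∀ x y, 0 ≤ ent (ν x) (μ x) (ν y) (μ y) := fun x y =>
    ent_nonneg (hν _) (hμn _) (hν _) (hμn _) (h0 _) (h0 _)
  have hX0 : ∀ τ, 0 ≤ X τ := fun τ => sum_nonneg fun A _ => hentn _ _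
  have hmargR : ∀ (g : Finset (Sym2 V) → ℝ) τ, marg S g τ = ∑ A ∈ R.powerset, marg Q g (τ ∪ A) := by
    intro g τ
    rw [← marg_union hRQ, hSU]
  have hY0 : ∀ τ, 0 ≤ Y τ := fun τ => by
    simp only [hY]
    rw [hmargR, hmargR]
    exact sub_nonneg.2 (log_sum _ _ _ (fun _ _ => marg_nonneg hν _ _)
      (fun _ _ => marg_nonneg hμn _ _) fun _ _ => marg_zero hμn h0 _ _)
  have sumX : ∑ τ ∈ (insert e S)ᶜ.powerset, X τ = inEnt ν μ {e} := by
    have hcompl : ({e} : Finset (Sym2 V))ᶜ = (insert e S)ᶜ ∪ S := by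
      ext x
      by_cases hxe : x = e
      · subst hxe; simp [heS]
      · by_cases hxS : x ∈ S <;> simp [hxe, hxS]
    have hdis : Disjoint (insert e S)ᶜ S :=
      disjoint_left.2 fun x hx hxS => (mem_compl.1 hx) (mem_insert_of_mem hxS)
    rw [inEnt_singleton, hcompl, sum_powerset_union _ _ hdis]
  have sumY : ∑ τ ∈ Sᶜ.powerset, Y τ = outEnt ν μ Q - outEnt ν μ S := by
    have hcompl : Qᶜ = Sᶜ ∪ R := by
      ext x
      simp only [hQ, hR, mem_compl, mem_sdiff, mem_union, mem_inter]
      tauto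
    have hdis : Disjoint Sᶜ R :=
      disjoint_left.2 fun x hx hxR => (mem_compl.1 hx) (mem_inter.1 hxR).1
    rw [outEnt, hcompl, sum_powerset_union _ _ hdis, outEnt, ← sum_sub_distrib]
  have hsub : (insert e S)ᶜ.powerset ⊆ Sᶜ.powerset :=
    powerset_mono.2 (compl_subset_compl.2 (subset_insert e S))
  have sumY' : ∑ τ ∈ (insert e S)ᶜ.powerset, Y τ ≤ outEnt ν μ Q - outEnt ν μ S := by
    rw [← sumY]
    exact sum_le_sum_of_subset_of_nonneg hsub fun τ _ _ => hY0 τ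
  have hcst : 0 ≤ 4 * (lam + (1 + B) ^ 2) * ((1 + lam) / lam) := by positivity
  have main : ∀ τ ∈ (insert e S)ᶜ.powerset,
      ent (marg S ν (insert e τ)) (marg S μ (insert e τ)) (marg S ν τ) (marg S μ τ) ≤
        4 * (lam + (1 + B) ^ 2) * ((1 + lam) / lam) * (X τ + Y τ) := by
    intro τ hτ
    have hτc := mem_powerset.1 hτ
    have heτ : e ∉ τ := fun hh => (mem_compl.1 (hτc hh)) (mem_insert_self _ _)
    have hτS : Disjoint τ S :=
      disjoint_left.2 fun x hx hxS => (mem_compl.1 (hτc hx)) (mem_insert_of_mem hxS)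
    have hτQ : Disjoint τ Q := hτS.mono_right hQS
    by_cases hz : marg S μ (insert e τ) = 0
    · rw [hz, marg_zero hμn h0 _ _ hz, ent_zero_left]
      exact mul_nonneg hcst (add_nonneg (hX0 τ) (hY0 τ))
    have heA : ∀ A ⊆ S, e ∉ τ ∪ A := fun A hA hh =>
      (mem_union.1 hh).elim heτ fun hh' => heS (hA hh')
    have hzero : ∀ A ⊆ S, ∀ f ∈ τ ∪ A, touch e f → μ (insert e (τ ∪ A)) = 0 := by
      intro A hA f hf ht
      rw [hμ, wt_fug_insert_zero (heA A hA) hf ht, mul_zero]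
    have hτe : ∀ f ∈ τ, ¬ touch e f := by
      intro f hf ht
      refine hz (sum_eq_zero fun A hA => ?_)
      rw [insert_union]
      exact hzero A (mem_powerset.1 hA) f (mem_union_left _ hf) ht
    have hins : ∀ A ⊆ Q, μ (insert e (τ ∪ A)) = lam * μ (τ ∪ A) := by
      intro A hA
      rw [hμ, hμ, wt_fug_insert heE (heA A (hA.trans hQS))]
      · ring
      · intro f hf hfE ht
        rcases mem_union.1 hf with hf' | hf'
        · exact hτe f hf' ht
        · have hfQ := mem_sdiff.1 (hA hf')
          exact hfQ.2 (mem_filter.2 ⟨hfE, fun hfe => heS (hfe ▸ hfQ.1), ht⟩)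
    have hone : ∀ g : Finset (Sym2 V) → ℝ, (∀ x, μ x = 0 → g x = 0) →
        marg S g (insert e τ) = ∑ A ∈ Q.powerset, g (insert e (τ ∪ A)) := by
      intro g hg
      unfold marg
      rw [← sum_subset (powerset_mono.2 hQS)]
      · exact sum_congr rfl fun A _ => by rw [insert_union]
      · intro A hA hAQ
        have hAS := mem_powerset.1 hA
        have : ∃ f ∈ A, f ∉ Q := by
          by_contra hcon
          push Not at hcon
          exact hAQ (mem_powerset.2 hcon)
        obtain ⟨f, hfA, hfQ⟩ := this
        have hfN : f ∈ nbr E e := by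
          by_contra hh
          exact hfQ (mem_sdiff.2 ⟨hAS hfA, hh⟩)
        rw [insert_union]
        exact hg _ (hzero A hAS f (mem_union_right _ hfA) (mem_filter.1 hfN).2.2)
    have hz1 : marg S μ (insert e τ) = lam * marg Q μ τ := by
      rw [hone μ fun x hx => hx, marg, mul_sum]
      exact sum_congr rfl fun A hA => hins A (mem_powerset.1 hA)
    set zb := marg Q μ τ with hzb
    have hzbp : 0 < zb := by
      refine lt_of_le_of_ne (marg_nonneg hμn _ _) fun hh => hz ?_
      rw [hz1, ← hh, mul_zero]
    -- Split the configurations on `R` into the empty one and the rest.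
    have hsplit : ∀ g : Finset (Sym2 V) → ℝ,
        marg S g τ = marg Q g τ + ∑ A ∈ R.powerset.erase ∅, marg Q g (τ ∪ A) := by
      intro g
      rw [hmargR, ← add_sum_erase _ _ (empty_mem_powerset R), union_empty]
    set b := marg Q ν τ with hb
    set zc := ∑ A ∈ R.powerset.erase ∅, marg Q μ (τ ∪ A) with hzc
    set cc := ∑ A ∈ R.powerset.erase ∅, marg Q ν (τ ∪ A) with hcc
    have hγ : zb + zc ≤ (1 + B) ^ 2 * zb := by
      rw [← hsplit μ, hzb, marg_eq hμ hτS, marg_eq hμ hτQ]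
      have hE : delE (restr (fug E lam) S τ) e = restr (fug E lam) Q τ := by
        funext f
        by_cases hfE : f ∈ E
        swap
        · have : fug E lam f = 0 := by rw [fug, if_neg hfE]
          simp [delE, restr, this]
        unfold delE restr
        by_cases ht : touch e f
        · rw [if_pos ht, if_neg]
          rintro ⟨hfQ, -⟩
          have hfQ' := mem_sdiff.1 hfQ
          exact hfQ'.2 (mem_filter.2 ⟨hfE, fun hfe => heS (hfe ▸ hfQ'.1), ht⟩)
        · rw [if_neg ht]
          have : f ∈ Q ↔ f ∈ S := by
            rw [hQ, mem_sdiff]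
            exact and_iff_left fun hh => ht (mem_filter.1 hh).2.2
          simp only [this]
      have := pf_le_delE (h.restr S τ) e
      rw [hE] at this
      calc μ τ * pf (restr (fug E lam) S τ) ≤
          μ τ * ((1 + B) ^ 2 * pf (restr (fug E lam) Q τ)) :=
            mul_le_mul_of_nonneg_left this (hμn τ)
        _ = _ := by ring
    have three := ent_three (a := marg S ν (insert e τ)) (b := b) (c := cc) hl
      (marg_nonneg hν _ _) (marg_nonneg hν _ _)
      (sum_nonneg fun _ _ => marg_nonneg hν _ _) hzbp
      (sum_nonneg fun _ _ => marg_nonneg hμn _ _)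
      (fun hzc0 => sum_eq_zero fun A hA => marg_zero hμn h0 _ _
        ((sum_eq_zero_iff_of_nonneg fun _ _ => marg_nonneg hμn _ _).1 hzc0 A hA)) hγ
    rw [hsplit ν, hsplit μ, hz1]
    refine three.trans (mul_le_mul_of_nonneg_left (add_le_add ?_ ?_) hcst)
    · have h1 := ent_sum_le Q.powerset (fun A => ν (insert e (τ ∪ A))) (fun A => ν (τ ∪ A))
        (fun A => μ (τ ∪ A)) hl (fun _ _ => hν _) (fun _ _ => hν _) (fun _ _ => hμn _)
        (fun A hA hA0 => h0 _ (by rw [hins A (mem_powerset.1 hA), hA0, mul_zero]))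
        (fun A hA hA0 => h0 _ hA0) hzbp
      rw [hone ν h0]
      refine h1.trans ?_
      calc ∑ A ∈ Q.powerset, ent (ν (insert e (τ ∪ A))) (lam * μ (τ ∪ A)) (ν (τ ∪ A)) (μ (τ ∪ A))
          = ∑ A ∈ Q.powerset, ent (ν (insert e (τ ∪ A))) (μ (insert e (τ ∪ A)))
              (ν (τ ∪ A)) (μ (τ ∪ A)) :=
            sum_congr rfl fun A hA => by rw [hins A (mem_powerset.1 hA)]
        _ ≤ X τ := sum_le_sum_of_subset_of_nonneg (powerset_mono.2 hQS) fun _ _ _ => hentn _ _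
    · have h1 : kl cc zc ≤ ∑ A ∈ R.powerset.erase ∅, kl (marg Q ν (τ ∪ A)) (marg Q μ (τ ∪ A)) :=
        log_sum _ _ _ (fun _ _ => marg_nonneg hν _ _) (fun _ _ => marg_nonneg hμn _ _)
          fun _ _ => marg_zero hμn h0 _ _
      simp only [hY]
      rw [hsplit ν, hsplit μ, ← add_sum_erase _ _ (empty_mem_powerset R), union_empty, ent]
      linarith
  rw [outEnt_sub heS]
  calc _ ≤ ∑ τ ∈ (insert e S)ᶜ.powerset,
        4 * (lam + (1 + B) ^ 2) * ((1 + lam) / lam) * (X τ + Y τ) := sum_le_sum main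
    _ = 4 * (lam + (1 + B) ^ 2) * ((1 + lam) / lam) *
        (inEnt ν μ {e} + ∑ τ ∈ (insert e S)ᶜ.powerset, Y τ) := by
          rw [← mul_sum, sum_add_distrib, sumX]
    _ ≤ _ := mul_le_mul_of_nonneg_left (add_le_add le_rfl sumY') hcst

/-! ### Approximate tensorization of entropy -/

/-- Approximate tensorization: the relative entropy is at most a constant, depending only on the
fugacity and the degree bounds, times the sum of the single-edge conditional entropies. -/
lemma tensorization {B lam : ℝ} (hB : 0 ≤ B) (hl : 0 < lam) (D : ℕ) :
    ∃ C : ℝ, 1 ≤ C ∧ ∀ (V : Type) [Fintype V] [DecidableEq V] (E : Finset (Sym2 V)) (c : ℝ)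
      (ν μ : Finset (Sym2 V) → ℝ), Bdd (fug E lam) B →
      (∀ e ∈ E, (nbr E e).card ≤ D) → 0 < c → (∀ x, μ x = c * wt (fug E lam) x) →
      (∀ x, 0 ≤ ν x) → (∀ x, μ x = 0 → ν x = 0) →
      inEnt ν μ E ≤ C * ∑ e ∈ E, inEnt ν μ {e} := by
  set C1 := 4 * (lam + (1 + B) ^ 2) * ((1 + lam) / lam) with hC1
  have hC1p : 0 < C1 := by positivity
  set K := ⌈2 * (1 + 6 * B) * (1 + B) ^ 3 / lam⌉₊ with hK
  set θ := 1 / (2 * C1 * (D + 1) + 1) with hθ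
  have hden : 0 < 2 * C1 * (D + 1) + 1 := by positivity
  have hθ0 : 0 < θ := by positivity
  have hθ1 : θ ≤ 1 := by
    rw [hθ, div_le_one hden]
    have : 0 ≤ 2 * C1 * ((D : ℝ) + 1) := by positivity
    linarith
  refine ⟨max 1 (2 * (θ * C1) / θ ^ K), le_max_left _ _, ?_⟩
  intro V _ _ E c ν μ h hN hc hμ hν h0
  have hμn : ∀ x, 0 ≤ μ x := fun x => by
    rw [hμ]; exact mul_nonneg hc.le (wt_nonneg (fug_nonneg hl) x)
  have hH := inEnt_nonneg hν hμn h0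
  set L := ∑ e ∈ E, inEnt ν μ {e} with hLdef
  have hL0 : 0 ≤ L := sum_nonneg fun e _ => hH {e}
  have dec : θ ^ K * inEnt ν μ E ≤ bern θ E (inEnt ν μ) := by
    refine bern_decay E (inEnt ν μ) K (fun S hS => ?_) hθ0 hθ1
    rw [← sum_subset hS]
    · refine (inEnt_erase h hB hl hc hμ hν h0 S).trans ?_
      exact mul_le_mul_of_nonneg_right (Nat.le_ceil _) (hH S)
    · intro e _ he
      rw [erase_eq_of_notMem he, sub_self]
  have exp : bern θ E (inEnt ν μ) ≤ 2 * (θ * C1) * L := by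
    refine explore E (fun U => bern θ U (inEnt ν μ)) (fun e => inEnt ν μ {e}) (nbr E) (θ * C1) D
      (by positivity) (fun e => hH {e}) ?_ (fun e => filter_subset _ _) ?_ ?_ ?_
    · simp only [bern_empty, inEnt_empty]
    · intro f hf
      refine le_trans (card_le_card ?_) (hN f hf)
      intro e he
      simp only [nbr, mem_filter] at he ⊢
      exact ⟨he.1, fun hh => he.2.2.1 hh.symm, touch_comm.1 he.2.2.2⟩
    · have : θ * C1 * D = C1 * D / (2 * C1 * (D + 1) + 1) := by rw [hθ]; ring
      rw [this, div_le_iff₀ hden]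
      nlinarith
    · intro U hU e he
      have heU := notMem_erase e U
      have h1 := bern_insert_sub θ heU (inEnt ν μ)
      rw [insert_erase he] at h1
      rw [h1, mul_assoc]
      refine mul_le_mul_of_nonneg_left ?_ hθ0.le
      have h2 : bern θ (U.erase e) (fun S => inEnt ν μ (insert e S) - inEnt ν μ S) ≤
          bern θ (U.erase e) (fun S => C1 * (inEnt ν μ {e} +
            (inEnt ν μ S - inEnt ν μ (S \ nbr E e)))) := by
        refine bern_mono hθ0.le hθ1 _ fun S hS => ?_
        have := outEnt_local h hl hc hμ hν h0 (hU he) (fun hh => heU (hS hh))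
        unfold inEnt at this ⊢
        refine (le_of_eq ?_).trans (this.trans (le_of_eq ?_)) <;> ring
      refine h2.trans (le_of_eq ?_)
      rw [bern_mul, bern_add θ _ (fun _ => inEnt ν μ {e}), bern_const,
        bern_sub θ _ (inEnt ν μ) (fun S => inEnt ν μ (S \ nbr E e)), bern_sdiff]
  have hθK : 0 < θ ^ K := pow_pos hθ0 K
  calc inEnt ν μ E ≤ 2 * (θ * C1) / θ ^ K * L := by
        rw [div_mul_eq_mul_div, le_div_iff₀ hθK]
        linarith
    _ ≤ _ := mul_le_mul_of_nonneg_right (le_max_right _ _) hL0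

end matchings

/-! ### Entropy decay for the Glauber dynamics -/

section glauber
variable {V : Type} [Fintype V] [DecidableEq V]

/-- Relative entropy of `ν` with respect to `μ`. -/
noncomputable def relEnt {ι : Type*} [Fintype ι] (ν μ : ι → ℝ) : ℝ := ∑ x, kl (ν x) (μ x)

lemma outEnt_empty_eq {α : Type*} [Fintype α] [DecidableEq α] (ν μ : Finset α → ℝ) :
    outEnt ν μ ∅ = relEnt ν μ := by
  unfold outEnt relEnt
  simp only [marg_empty, compl_empty, powerset_univ]

/-- The law obtained from `ν` by resampling the status of `e` according to `μ`. -/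
noncomputable def resample {α : Type*} [DecidableEq α] (ν μ : Finset α → ℝ) (e : α)
    (y : Finset α) : ℝ :=
  (ν y + ν (symmDiff y {e})) * μ y / (μ y + μ (symmDiff y {e}))

lemma symmDiff_of_notMem {α : Type*} [DecidableEq α] {e : α} {x : Finset α} (h : e ∉ x) :
    symmDiff x {e} = insert e x := by
  ext y
  by_cases hy : y = e
  · subst hy; simp [mem_symmDiff, h]
  · simp [mem_symmDiff, hy]

lemma symmDiff_insert {α : Type*} [DecidableEq α] {e : α} {x : Finset α} (h : e ∉ x) :
    symmDiff (insert e x) {e} = x := by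
  rw [← symmDiff_of_notMem h, symmDiff_symmDiff_cancel_right]

lemma marg_singleton {α : Type*} [Fintype α] [DecidableEq α] (g : Finset α → ℝ) (e : α)
    (τ : Finset α) : marg {e} g τ = g (insert e τ) + g τ := by
  have := marg_insert (notMem_empty e) g τ
  simpa [marg_empty] using this

lemma resample_pair {α : Type*} [DecidableEq α] (ν μ : Finset α → ℝ) {e : α} {τ : Finset α}
    (h : e ∉ τ) :
    resample ν μ e τ = (ν (insert e τ) + ν τ) / (μ (insert e τ) + μ τ) * μ τ ∧
    resample ν μ e (insert e τ) =
      (ν (insert e τ) + ν τ) / (μ (insert e τ) + μ τ) * μ (insert e τ) := by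
  unfold resample
  rw [symmDiff_insert h, symmDiff_of_notMem h, add_comm (ν τ), add_comm (μ τ)]
  constructor <;> ring

lemma sum_resample {α : Type*} [Fintype α] [DecidableEq α] {ν μ : Finset α → ℝ}
    (hμ : ∀ x, 0 ≤ μ x) (h0 : ∀ x, μ x = 0 → ν x = 0) (e : α) :
    ∑ y, resample ν μ e y = ∑ y, ν y := by
  rw [sum_univ_insert e, sum_univ_insert e]
  refine sum_congr rfl fun τ hτ => ?_
  have he : e ∉ τ := fun h => notMem_erase e univ (mem_powerset.1 hτ h)
  obtain ⟨h1, h2⟩ := resample_pair ν μ he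
  rw [h1, h2]
  by_cases hz : μ (insert e τ) + μ τ = 0
  · have a1 : μ τ = 0 := le_antisymm (by linarith [hμ (insert e τ)]) (hμ τ)
    have a2 : μ (insert e τ) = 0 := by linarith
    rw [a1, a2, h0 _ a1, h0 _ a2]; simp
  · field_simp
    ring

lemma relEnt_resample {α : Type*} [Fintype α] [DecidableEq α] (ν μ : Finset α → ℝ) (e : α) :
    relEnt (resample ν μ e) μ = outEnt ν μ {e} := by
  have hc : ({e} : Finset α)ᶜ = univ.erase e := by ext x; simp
  rw [relEnt, sum_univ_insert e, outEnt, hc]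
  refine sum_congr rfl fun τ hτ => ?_
  have he : e ∉ τ := fun h => notMem_erase e univ (mem_powerset.1 hτ h)
  obtain ⟨h1, h2⟩ := resample_pair ν μ he
  rw [h1, h2, marg_singleton, marg_singleton]
  have hkl : ∀ r z : ℝ, kl (r * z) z = r * z * Real.log r := by
    intro r z
    rw [kl_def]
    by_cases hz : z = 0
    · simp [hz]
    · rw [mul_div_cancel_right₀ _ hz]
  rw [hkl, hkl, ← add_mul, ← mul_add, kl_def]
  by_cases hz : μ (insert e τ) + μ τ = 0
  · rw [hz]; simp
  · rw [add_comm (μ τ), div_mul_cancel₀ _ hz]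

/-- The predicate that `ν` is a probability density absolutely continuous with respect to `μ`. -/
def IsDens {ι : Type*} [Fintype ι] (ν μ : ι → ℝ) : Prop :=
  (∀ x, 0 ≤ ν x) ∧ (∀ x, μ x = 0 → ν x = 0) ∧ ∑ x, ν x = 1

lemma IsDens.resample {α : Type*} [Fintype α] [DecidableEq α] {ν μ : Finset α → ℝ}
    (h : IsDens ν μ) (hμ : ∀ x, 0 ≤ μ x) (e : α) : IsDens (resample ν μ e) μ := by
  refine ⟨fun x => ?_, fun x hx => ?_, ?_⟩
  · exact div_nonneg (mul_nonneg (add_nonneg (h.1 _) (h.1 _)) (hμ x)) (add_nonneg (hμ _) (hμ _))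
  · simp [_root_.resample, hx]
  · rw [sum_resample hμ h.2.1, h.2.2]

lemma isMatchingSet_iff (G : SimpleGraph V) [DecidableRel G.Adj] (M : Finset (Sym2 V)) :
    IsMatchingSet G M ↔ M ⊆ G.edgeFinset ∧ PD M := by
  unfold IsMatchingSet PD
  rw [← SimpleGraph.coe_edgeFinset, coe_subset]

lemma mdGibbsWeight_eq (G : SimpleGraph V) [DecidableRel G.Adj] (lam : ℝ) (M : Finset (Sym2 V)) :
    mdGibbsWeight G lam M = wt (fug G.edgeFinset lam) M := by
  unfold mdGibbsWeight wt
  by_cases h : PD M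
  · by_cases hE : M ⊆ G.edgeFinset
    · rw [if_pos ((isMatchingSet_iff G M).2 ⟨hE, h⟩), if_pos h, ← prod_const]
      exact prod_congr rfl fun e he => by rw [fug, if_pos (hE he)]
    · rw [if_neg fun hh => hE ((isMatchingSet_iff G M).1 hh).1, if_pos h]
      obtain ⟨e, he, heE⟩ := not_subset.1 hE
      exact (prod_eq_zero he (by rw [fug, if_neg heE])).symm
  · rw [if_neg fun hh => h ((isMatchingSet_iff G M).1 hh).2, if_neg h]

lemma mdGibbs_eq (G : SimpleGraph V) [DecidableRel G.Adj] (lam : ℝ) (M : Finset (Sym2 V)) :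
    mdGibbs G lam M = (pf (fug G.edgeFinset lam))⁻¹ * wt (fug G.edgeFinset lam) M := by
  unfold mdGibbs pf
  simp only [mdGibbsWeight_eq]
  rw [div_eq_inv_mul]

lemma mdGibbs_nonneg (G : SimpleGraph V) [DecidableRel G.Adj] {lam : ℝ} (hl : 0 < lam)
    (M : Finset (Sym2 V)) : 0 ≤ mdGibbs G lam M := by
  rw [mdGibbs_eq]
  exact mul_nonneg (inv_nonneg.2 (pf_pos (fug_nonneg hl)).le) (wt_nonneg (fug_nonneg hl) M)

lemma sum_mdGibbs (G : SimpleGraph V) [DecidableRel G.Adj] {lam : ℝ} (hl : 0 < lam) :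
    ∑ M, mdGibbs G lam M = 1 := by
  simp only [mdGibbs_eq, ← mul_sum]
  exact inv_mul_cancel₀ (pf_pos (fug_nonneg hl)).ne'

/-- From a matching, the acceptance probability is the heat-bath probability. -/
lemma mdAccept_eq (G : SimpleGraph V) [DecidableRel G.Adj] {lam : ℝ}
    {M : Finset (Sym2 V)} (hM : mdGibbs G lam M ≠ 0) (e : Sym2 V) :
    mdAccept G lam M e =
      mdGibbs G lam (symmDiff M {e}) / (mdGibbs G lam M + mdGibbs G lam (symmDiff M {e})) := by
  have hw : mdGibbsWeight G lam M ≠ 0 := fun h => hM (by rw [mdGibbs, h, zero_div])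
  have hMm : IsMatchingSet G M := by
    by_contra h
    exact hw (by rw [mdGibbsWeight, if_neg h])
  have hZ : ∑ M' : Finset (Sym2 V), mdGibbsWeight G lam M' ≠ 0 := fun h =>
    hM (by rw [mdGibbs, h, div_zero])
  unfold mdGibbs
  rw [← add_div, div_div_div_cancel_right₀ hZ]
  unfold mdAccept
  have e1 : mdGibbsWeight G lam M = lam ^ M.card := by rw [mdGibbsWeight, if_pos hMm]
  rw [e1, mdGibbsWeight]
  split_ifs with h
  · rfl
  · rw [zero_div]

/-- One step of the dynamics is the average over `e ∈ E` of resampling `e`. -/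
lemma vecMul_mdGlauber (G : SimpleGraph V) [DecidableRel G.Adj] {lam : ℝ} (hl : 0 < lam)
    {ν : Finset (Sym2 V) → ℝ} (h0 : ∀ x, mdGibbs G lam x = 0 → ν x = 0) (y : Finset (Sym2 V)) :
    ∑ x, ν x * mdGlauber G lam x y =
      (G.edgeFinset.card : ℝ)⁻¹ * ∑ e ∈ G.edgeFinset, resample ν (mdGibbs G lam) e y := by
  have hμ := mdGibbs_nonneg G hl
  simp only [mdGlauber, Matrix.of_apply]
  have : ∀ x, ν x * ((G.edgeFinset.card : ℝ)⁻¹ * ∑ e ∈ G.edgeFinset,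
        ((if y = symmDiff x {e} then mdAccept G lam x e else 0) +
         (if y = x then 1 - mdAccept G lam x e else 0))) =
      (G.edgeFinset.card : ℝ)⁻¹ * ∑ e ∈ G.edgeFinset,
        ((if x = symmDiff y {e} then ν x * mdAccept G lam x e else 0) +
         (if x = y then ν x * (1 - mdAccept G lam x e) else 0)) := by
    intro x
    rw [mul_left_comm, mul_sum]
    congr 1
    refine sum_congr rfl fun e _ => ?_
    have h1 : y = symmDiff x {e} ↔ x = symmDiff y {e} := by
      constructor
      · rintro rfl; rw [symmDiff_symmDiff_cancel_right]
      · rintro rfl; rw [symmDiff_symmDiff_cancel_right]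
    have h2 : y = x ↔ x = y := eq_comm
    simp only [h1, h2, mul_add, mul_ite, mul_zero]
  rw [sum_congr rfl fun x _ => this x, ← mul_sum, sum_comm]
  congr 1
  refine sum_congr rfl fun e _ => ?_
  rw [sum_add_distrib, sum_ite_eq' univ, sum_ite_eq' univ, if_pos (mem_univ _),
    if_pos (mem_univ _), resample]
  set y' := symmDiff y {e} with hy'
  have hyy : symmDiff y' {e} = y := by rw [hy', symmDiff_symmDiff_cancel_right]
  have t1 : ν y' * mdAccept G lam y' e =
      ν y' * mdGibbs G lam y / (mdGibbs G lam y + mdGibbs G lam y') := by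
    by_cases hz : mdGibbs G lam y' = 0
    · rw [h0 _ hz]; simp
    · rw [mdAccept_eq G hz, hyy, add_comm (mdGibbs G lam y')]; ring
  have t2 : ν y * (1 - mdAccept G lam y e) =
      ν y * mdGibbs G lam y / (mdGibbs G lam y + mdGibbs G lam y') := by
    by_cases hz : mdGibbs G lam y = 0
    · rw [h0 _ hz]; simp
    · rw [mdAccept_eq G hz]
      have hp : 0 < mdGibbs G lam y := lt_of_le_of_ne (hμ y) (Ne.symm hz)
      have hs : mdGibbs G lam y + mdGibbs G lam y' ≠ 0 := by linarith [hμ y'] |> ne_of_gt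
      rw [← hy']
      field_simp
      ring
  rw [t1, t2]
  ring

/-- One step contracts relative entropy by a factor `1 - 1 / (C m)`. -/
lemma relEnt_step (G : SimpleGraph V) [DecidableRel G.Adj] {lam C : ℝ} (hl : 0 < lam)
    (hC : 0 < C) (hm : 1 ≤ G.edgeFinset.card) {ν ν' : Finset (Sym2 V) → ℝ}
    (hAT : inEnt ν (mdGibbs G lam) G.edgeFinset ≤
      C * ∑ e ∈ G.edgeFinset, inEnt ν (mdGibbs G lam) {e})
    (hν : IsDens ν (mdGibbs G lam))
    (hν' : ∀ y, ν' y = ∑ x, ν x * mdGlauber G lam x y) :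
    IsDens ν' (mdGibbs G lam) ∧
    relEnt ν' (mdGibbs G lam) ≤
      (1 - 1 / (C * G.edgeFinset.card)) * relEnt ν (mdGibbs G lam) := by
  set μ := mdGibbs G lam with hμdef
  set E := G.edgeFinset with hE
  have hμ : ∀ x, 0 ≤ μ x := mdGibbs_nonneg G hl
  have hmp : (0 : ℝ) < E.card := by exact_mod_cast hm
  have hres : ∀ y, ν' y = (E.card : ℝ)⁻¹ * ∑ e ∈ E, resample ν μ e y := fun y => by
    rw [hν', vecMul_mdGlauber G hl hν.2.1]
  have hr := fun e => hν.resample hμ e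
  refine ⟨⟨fun y => ?_, fun y hy => ?_, ?_⟩, ?_⟩
  · rw [hres]
    exact mul_nonneg (inv_nonneg.2 hmp.le) (sum_nonneg fun e _ => (hr e).1 y)
  · rw [hres, sum_eq_zero fun e _ => (hr e).2.1 y hy, mul_zero]
  · simp only [hres]
    rw [← mul_sum, sum_comm, sum_congr rfl fun e _ => (hr e).2.2, sum_const, nsmul_eq_mul, mul_one,
      inv_mul_cancel₀ hmp.ne']
  · have h1 : relEnt ν' μ ≤ (E.card : ℝ)⁻¹ * ∑ e ∈ E, outEnt ν μ {e} := by
      have : ∀ y, kl (ν' y) (μ y) ≤ (E.card : ℝ)⁻¹ * ∑ e ∈ E, kl (resample ν μ e y) (μ y) := by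
        intro y
        have e1 : μ y = (E.card : ℝ)⁻¹ * ∑ e ∈ E, μ y := by
          rw [sum_const, nsmul_eq_mul, inv_mul_cancel_left₀ hmp.ne']
        have e2 : kl (ν' y) (μ y) =
            (E.card : ℝ)⁻¹ * kl (∑ e ∈ E, resample ν μ e y) (∑ e ∈ E, μ y) := by
          rw [← kl_smul (inv_ne_zero hmp.ne'), ← e1, ← hres]
        rw [e2]
        exact mul_le_mul_of_nonneg_left (log_sum _ _ _ (fun e _ => (hr e).1 y) (fun _ _ => hμ y)
          fun e _ hy => (hr e).2.1 y hy) (inv_nonneg.2 hmp.le)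
      refine (sum_le_sum fun y _ => this y).trans (le_of_eq ?_)
      rw [← mul_sum, sum_comm]
      congr 1
      exact sum_congr rfl fun e _ => relEnt_resample ν μ e
    have h2 : ∑ e ∈ E, outEnt ν μ {e} = E.card * relEnt ν μ - ∑ e ∈ E, inEnt ν μ {e} := by
      have : ∀ e, outEnt ν μ {e} = relEnt ν μ - inEnt ν μ {e} := fun e => by
        rw [inEnt, outEnt_empty_eq]; ring
      rw [sum_congr rfl fun e _ => this e, sum_sub_distrib, sum_const, nsmul_eq_mul]
    -- Both densities live on subsets of `E`, so nothing is left outside `E`.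
    have h3 : outEnt ν μ E = 0 := by
      have hμ0 : ∀ x, ¬ x ⊆ E → μ x = 0 := fun x hx => by
        obtain ⟨e, he, heE⟩ := not_subset.1 hx
        rw [hμdef, mdGibbs_eq, wt_eq_zero he (by rw [fug, if_neg heE]), mul_zero]
      have hone : ∀ g : Finset (Sym2 V) → ℝ, (∀ x, μ x = 0 → g x = 0) → ∑ x, g x = 1 →
          marg E g ∅ = 1 := by
        intro g hg hg1
        rw [marg, ← hg1, ← sum_subset (subset_univ E.powerset)]
        · exact sum_congr rfl fun A _ => by rw [empty_union]
        · intro x _ hx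
          exact hg x (hμ0 x fun hh => hx (mem_powerset.2 hh))
      refine sum_eq_zero fun τ hτ => ?_
      by_cases hτ0 : τ = ∅
      · rw [hτ0, hone ν hν.2.1 hν.2.2, hone μ (fun _ hx => hx) (sum_mdGibbs G hl), kl_self_one]
      · obtain ⟨e, he⟩ := nonempty_iff_ne_empty.2 hτ0
        have heE : e ∉ E := mem_compl.1 (mem_powerset.1 hτ he)
        have : marg E ν τ = 0 := sum_eq_zero fun A _ =>
          hν.2.1 _ (hμ0 _ fun hh => heE (hh (mem_union_left _ he)))
        rw [this, kl_def, zero_mul]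
    have h4 : relEnt ν μ ≤ C * ∑ e ∈ E, inEnt ν μ {e} := by
      refine le_trans (le_of_eq ?_) hAT
      rw [inEnt, h3, outEnt_empty_eq, sub_zero]
    rw [h2] at h1
    refine h1.trans ?_
    have h5 : (1 - 1 / (C * E.card)) * relEnt ν μ =
        (E.card : ℝ)⁻¹ * (E.card * relEnt ν μ - relEnt ν μ / C) := by
      field_simp
    rw [h5]
    refine mul_le_mul_of_nonneg_left (sub_le_sub_left ?_ _) (inv_nonneg.2 hmp.le)
    rw [div_le_iff₀ hC]
    linarith

/-! ### From entropy to mixing time -/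

/-- Total variation distance is at most the square root of relative entropy (by way of the
Hellinger distance). -/
lemma tvDist_sq_le {ι : Type} [Fintype ι] [DecidableEq ι] {ν μ : ι → ℝ} (hν : IsDens ν μ)
    (hμ : ∀ x, 0 ≤ μ x) (hμ1 : ∑ x, μ x = 1) : tvDist ν μ ^ 2 ≤ relEnt ν μ := by
  have h1 : ∑ x, (√(ν x) - √(μ x)) ^ 2 ≤ relEnt ν μ := by
    have : ∀ x, ν x - μ x + (√(ν x) - √(μ x)) ^ 2 ≤ kl (ν x) (μ x) := fun x => by
      have := kl_ge_hell (hν.1 x) (hμ x) (hν.2.1 x) zero_le_one (fun h => absurd h one_ne_zero)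
      simpa using this
    have h2 := sum_le_sum fun x (_ : x ∈ univ) => this x
    rw [sum_add_distrib, sum_sub_distrib, hν.2.2, hμ1] at h2
    simpa [relEnt] using h2
  have h2 : ∑ x, (√(ν x) + √(μ x)) ^ 2 ≤ 4 := by
    calc ∑ x, (√(ν x) + √(μ x)) ^ 2 ≤ ∑ x, (2 * ν x + 2 * μ x) := by
          refine sum_le_sum fun x _ => ?_
          nlinarith [Real.sq_sqrt (hν.1 x), Real.sq_sqrt (hμ x), sq_nonneg (√(ν x) - √(μ x))]
      _ = 4 := by rw [sum_add_distrib, ← mul_sum, ← mul_sum, hν.2.2, hμ1]; norm_num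
  have h3 : ∑ x, |ν x - μ x| = ∑ x, |√(ν x) - √(μ x)| * (√(ν x) + √(μ x)) := by
    refine sum_congr rfl fun x _ => ?_
    have hp : 0 ≤ √(ν x) + √(μ x) := add_nonneg (Real.sqrt_nonneg _) (Real.sqrt_nonneg _)
    conv_rhs => rw [← abs_of_nonneg hp, ← abs_mul]
    congr 1
    have a1 := Real.sq_sqrt (hν.1 x)
    have a2 := Real.sq_sqrt (hμ x)
    linear_combination -a1 + a2
  have h4 := sum_mul_sq_le_sq_mul_sq univ (fun x => |√(ν x) - √(μ x)|)
    (fun x => √(ν x) + √(μ x))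
  simp only [sq_abs] at h4
  rw [← h3] at h4
  have h5 : 0 ≤ ∑ x, (√(ν x) - √(μ x)) ^ 2 := sum_nonneg fun x _ => sq_nonneg _
  unfold tvDist
  nlinarith

lemma bdd_fug (G : SimpleGraph V) [DecidableRel G.Adj] {lam : ℝ} (hl : 0 < lam) {D : ℕ}
    (hD : ∀ v, G.degree v ≤ D) : Bdd (fug G.edgeFinset lam) (D * lam) := by
  refine ⟨fug_nonneg hl, fun u => ?_⟩
  have : ∑ e with u ∈ e, fug G.edgeFinset lam e = G.degree u * lam := by
    rw [← SimpleGraph.card_incidenceFinset_eq_degree, SimpleGraph.incidenceFinset_eq_filter,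
      ← nsmul_eq_mul, ← sum_const, sum_filter, sum_filter, ← sum_subset (subset_univ G.edgeFinset)]
    · exact sum_congr rfl fun e he => by rw [fug, if_pos he]
    · intro e _ he
      rw [fug, if_neg he, ite_self]
  rw [this]
  exact mul_le_mul_of_nonneg_right (by exact_mod_cast hD u) hl.le

lemma card_nbr_le (G : SimpleGraph V) [DecidableRel G.Adj] {D : ℕ}
    (hD : ∀ v, G.degree v ≤ D) (e : Sym2 V) : (nbr G.edgeFinset e).card ≤ 2 * D := by
  induction e with | _ x y =>
  have hsub : nbr G.edgeFinset s(x, y) ⊆ G.incidenceFinset x ∪ G.incidenceFinset y := by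
    intro f hf
    obtain ⟨hfE, -, v, hv, hvf⟩ := mem_filter.1 hf
    simp only [SimpleGraph.incidenceFinset_eq_filter, mem_union, mem_filter]
    rcases Sym2.mem_iff.1 hv with rfl | rfl
    · exact Or.inl ⟨hfE, hvf⟩
    · exact Or.inr ⟨hfE, hvf⟩
  refine (card_le_card hsub).trans ((card_union_le _ _).trans ?_)
  rw [SimpleGraph.card_incidenceFinset_eq_degree, SimpleGraph.card_incidenceFinset_eq_degree]
  linarith [hD x, hD y]

/-- Every matching has probability at least exponentially small in the number of edges. -/
lemma neg_log_mdGibbs_le (G : SimpleGraph V) [DecidableRel G.Adj] {lam : ℝ} (hl : 0 < lam)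
    {x : Finset (Sym2 V)} (hx : 0 < mdGibbs G lam x) :
    -Real.log (mdGibbs G lam x) ≤ G.edgeFinset.card * (2 + lam + 1 / lam) := by
  set E := G.edgeFinset with hE
  have hpf := pf_pos (fug_nonneg (E := E) hl)
  have hxw : wt (fug E lam) x ≠ 0 := fun h => by
    rw [mdGibbs_eq, h, mul_zero] at hx; exact lt_irrefl _ hx
  have hxm : IsMatchingSet G x := by
    by_contra h
    rw [← mdGibbsWeight_eq, mdGibbsWeight, if_neg h] at hxw
    exact hxw rfl
  have hxE : x ⊆ E := ((isMatchingSet_iff G x).1 hxm).1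
  have hwx : wt (fug E lam) x = lam ^ x.card := by
    rw [← mdGibbsWeight_eq, mdGibbsWeight, if_pos hxm]
  have hpf_le : pf (fug E lam) ≤ (1 + lam) ^ E.card := by
    have h1 : pf (fug E lam) ≤ ∑ A ∈ E.powerset, lam ^ A.card := by
      unfold pf
      rw [← sum_subset (subset_univ E.powerset)]
      · refine sum_le_sum fun A _ => ?_
        rw [← mdGibbsWeight_eq, mdGibbsWeight]
        split_ifs
        · exact le_rfl
        · positivity
      · intro A _ hA
        obtain ⟨e, he, heE⟩ := not_subset.1 fun h => hA (mem_powerset.2 h)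
        exact wt_eq_zero he (by rw [fug, if_neg heE])
    refine h1.trans (le_of_eq ?_)
    have := sum_pow_mul_eq_add_pow lam 1 E
    simpa [add_comm] using this
  have hkey : (mdGibbs G lam x)⁻¹ ≤ (2 + lam + 1 / lam) ^ E.card := by
    have e1 : (mdGibbs G lam x)⁻¹ = pf (fug E lam) * (1 / lam) ^ x.card := by
      rw [mdGibbs_eq, ← hE, hwx, mul_inv, inv_inv, one_div, inv_pow]
    have e2 : 2 + lam + 1 / lam = (1 + lam) * (1 + 1 / lam) := by field_simp; ring
    have hlp : 0 < 1 / lam := by positivity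
    rw [e1, e2, mul_pow]
    refine mul_le_mul hpf_le ?_ (by positivity) (by positivity)
    calc (1 / lam) ^ x.card ≤ (1 + 1 / lam) ^ x.card := by gcongr; linarith
      _ ≤ (1 + 1 / lam) ^ E.card := pow_le_pow_right₀ (by linarith) (card_le_card hxE)
  have hpos : 0 < 2 + lam + 1 / lam := by positivity
  rw [← Real.log_inv]
  calc Real.log (mdGibbs G lam x)⁻¹ ≤ Real.log ((2 + lam + 1 / lam) ^ E.card) :=
        Real.log_le_log (inv_pos.2 hx) hkey
    _ = E.card * Real.log (2 + lam + 1 / lam) := by rw [Real.log_pow]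
    _ ≤ _ := mul_le_mul_of_nonneg_left
        ((Real.log_le_sub_one_of_pos hpos).trans (by linarith)) (Nat.cast_nonneg _)

end glauber

/-- **Optimal mixing of the Glauber dynamics for the monomer-dimer model.**
For every `Δ ≥ 3` and `λ > 0` there is a constant `C = C(Δ,λ)` such that on every graph
with `n ≥ 2` vertices, `m ≥ 1` edges and maximum degree at most `Δ`, the Glauber dynamics
for the monomer-dimer model with fugacity `λ` mixes (to total variation distance `1/4`)
within `C·m·log n` steps. -/
theorem matching_optimal_mixing
    (Δ : ℕ) (hΔ : 3 ≤ Δ) (lam : ℝ) (hlam : 0 < lam) :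
    ∃ C : ℝ, ∀ (V : Type) [Fintype V] [DecidableEq V]
      (G : SimpleGraph V) [DecidableRel G.Adj],
      2 ≤ Fintype.card V → 1 ≤ G.edgeFinset.card → (∀ v : V, G.degree v ≤ Δ) →
      (mixingTime (mdGibbs G lam) (mdGlauber G lam) (1 / 4) : ℝ) ≤
        C * (G.edgeFinset.card : ℝ) * Real.log (Fintype.card V) := by
  obtain ⟨C, hC1, hC⟩ := tensorization (B := Δ * lam) (lam := lam) (by positivity) hlam (2 * Δ)
  have hCp : 0 < C := by linarith
  set c1 := 2 + lam + 1 / lam with hc1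
  have hc1p : 2 ≤ c1 := by
    have : 0 < 1 / lam := by positivity
    linarith
  have hlog2 : 0 < Real.log 2 := Real.log_pos one_lt_two
  have hlogc : 0 ≤ Real.log (16 * c1) := Real.log_nonneg (by linarith)
  refine ⟨C * (Real.log (16 * c1) / Real.log 2 + 2) + 1 / Real.log 2, ?_⟩
  intro V _ _ G _ hn hm hdeg
  set E := G.edgeFinset with hE
  set μ := mdGibbs G lam with hμdef
  have hμ : ∀ x, 0 ≤ μ x := mdGibbs_nonneg G hlam
  have hmp : (1 : ℝ) ≤ E.card := by exact_mod_cast hm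
  have hmp0 : (0 : ℝ) < E.card := by linarith
  have hn2 : (2 : ℝ) ≤ Fintype.card V := by exact_mod_cast hn
  set ln := Real.log (Fintype.card V) with hln
  have hln2 : Real.log 2 ≤ ln := Real.log_le_log two_pos hn2
  set t := ⌈C * E.card * Real.log (16 * c1 * E.card)⌉₊ with ht
  have hrate : 0 ≤ 1 - 1 / (C * E.card) := by
    rw [sub_nonneg, div_le_one (mul_pos hCp hmp0)]
    nlinarith
  have hmix : mixingTime μ (mdGlauber G lam) (1 / 4) ≤ t := by
    refine Finset.sup_le fun x hx => Nat.sInf_le ?_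
    have hxp : 0 < μ x := (mem_filter.1 hx).2
    have hdecay : ∀ k : ℕ, IsDens (fun y => (mdGlauber G lam ^ k) x y) μ ∧
        relEnt (fun y => (mdGlauber G lam ^ k) x y) μ ≤
          (1 - 1 / (C * E.card)) ^ k * (-Real.log (μ x)) := by
      intro k
      induction k with
      | zero =>
        simp only [pow_zero, Matrix.one_apply, one_mul]
        refine ⟨⟨fun y => ?_, fun y hy => ?_, ?_⟩, ?_⟩
        · beta_reduce
          split_ifs <;> norm_num
        · beta_reduce
          rw [if_neg]
          rintro rfl
          exact hxp.ne' hy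
        · simp
        · unfold relEnt
          rw [sum_eq_single x]
          · beta_reduce
            rw [if_pos rfl, kl_def, one_mul, one_div, Real.log_inv]
          · intro y _ hy
            beta_reduce
            rw [if_neg (Ne.symm hy), kl_def, zero_mul]
          · intro h; exact absurd (mem_univ x) h
      | succ k ih =>
        have hstep := relEnt_step G hlam hCp hm (ν := fun y => (mdGlauber G lam ^ k) x y)
          (ν' := fun y => (mdGlauber G lam ^ (k + 1)) x y)
          (hC V E _ _ _ (bdd_fug G hlam hdeg) (fun e _ => card_nbr_le G hdeg e)
            (inv_pos.2 (pf_pos (fug_nonneg hlam))) (mdGibbs_eq G lam) ih.1.1 ih.1.2.1) ih.1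
          (fun y => by rw [pow_succ, Matrix.mul_apply])
        refine ⟨hstep.1, hstep.2.trans ?_⟩
        rw [pow_succ', mul_assoc]
        exact mul_le_mul_of_nonneg_left ih.2 hrate
    obtain ⟨hdens, hent⟩ := hdecay t
    have htv := tvDist_sq_le hdens hμ (sum_mdGibbs G hlam)
    have hexp : (1 - 1 / (C * E.card)) ^ t ≤ (16 * c1 * E.card)⁻¹ := by
      have h1 : 1 - 1 / (C * E.card) ≤ Real.exp (-(1 / (C * E.card))) := by
        linarith [Real.add_one_le_exp (-(1 / (C * (E.card : ℝ))))]
      have hpos : 0 < 16 * c1 * (E.card : ℝ) := by positivity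
      calc (1 - 1 / (C * E.card)) ^ t ≤ Real.exp (-(1 / (C * E.card))) ^ t :=
            pow_le_pow_left₀ hrate h1 t
        _ = Real.exp (-(t / (C * E.card))) := by rw [← Real.exp_nat_mul]; congr 1; ring
        _ ≤ Real.exp (-Real.log (16 * c1 * E.card)) := by
            refine Real.exp_le_exp.2 (neg_le_neg ?_)
            rw [le_div_iff₀ (mul_pos hCp hmp0), mul_comm]
            exact Nat.le_ceil _
        _ = _ := by rw [Real.exp_neg, Real.exp_log hpos]
    have hstart := neg_log_mdGibbs_le G hlam hxp
    have hstart0 : 0 ≤ -Real.log (μ x) := by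
      rw [neg_nonneg]
      refine Real.log_nonpos (hμ x) ?_
      rw [← sum_mdGibbs G hlam]
      exact single_le_sum (f := μ) (fun y _ => hμ y) (mem_univ x)
    have hfin : relEnt (fun y => (mdGlauber G lam ^ t) x y) μ ≤ 1 / 16 := by
      refine hent.trans ?_
      calc (1 - 1 / (C * E.card)) ^ t * (-Real.log (μ x)) ≤
          (16 * c1 * E.card)⁻¹ * (E.card * c1) :=
            mul_le_mul hexp hstart hstart0 (by positivity)
        _ = 1 / 16 := by
            have : c1 ≠ 0 := by linarith
            field_simp
    change tvDist _ μ ≤ 1 / 4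
    nlinarith
  have hm2 : (E.card : ℝ) ≤ (Fintype.card V : ℝ) ^ 2 := by
    have h1 : E.card ≤ (Fintype.card V).choose 2 := SimpleGraph.card_edgeFinset_le_card_choose_two
    have h2 : (Fintype.card V).choose 2 ≤ Fintype.card V ^ 2 := Nat.choose_le_pow _ _
    exact_mod_cast h1.trans h2
  have hlogm : Real.log (16 * c1 * E.card) ≤ (Real.log (16 * c1) / Real.log 2 + 2) * ln := by
    rw [Real.log_mul (by linarith) hmp0.ne', add_mul]
    refine add_le_add ?_ ?_
    · rw [div_mul_eq_mul_div, le_div_iff₀ hlog2]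
      exact mul_le_mul_of_nonneg_left hln2 hlogc
    · calc Real.log E.card ≤ Real.log ((Fintype.card V : ℝ) ^ 2) := Real.log_le_log hmp0 hm2
        _ = 2 * ln := by rw [Real.log_pow, hln]; norm_num
  have hlogm0 : 0 ≤ Real.log (16 * c1 * E.card) := Real.log_nonneg (by nlinarith)
  have hone : 1 ≤ 1 / Real.log 2 * E.card * ln := by
    rw [div_mul_eq_mul_div, div_mul_eq_mul_div, le_div_iff₀ hlog2, one_mul, one_mul]
    nlinarith
  calc (mixingTime μ (mdGlauber G lam) (1 / 4) : ℝ) ≤ t := by exact_mod_cast hmix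
    _ ≤ C * E.card * Real.log (16 * c1 * E.card) + 1 :=
        (Nat.ceil_lt_add_one (by positivity)).le
    _ ≤ C * E.card * ((Real.log (16 * c1) / Real.log 2 + 2) * ln) +
        1 / Real.log 2 * E.card * ln :=
        add_le_add (mul_le_mul_of_nonneg_left hlogm (by positivity)) hone
    _ = _ := by ring
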